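/- For every fixed 0<s<1 there exists a function Ω* satisfying (H) with Ω*(π/2)=1 and Ω*(θ)≥1 for all θ, such that its transformed angle function Ω̃* satisfies Ω̃*(φ)≥0 for all φ, and the generated potential V(x)=∫ W*(x−y) dρ_{1D}(y), with W*(x)=|x|^{−s}·Ω*(θ(x))+|x|², satisfies V(x)≥V(y) for every x∈ℝ² and every y∈supp ρ_{1D} (i.e. V attains its global minimum on supp ρ_{1D}, where it is constant). -/

import Mathlib

/-!
The angle function is the quartic form
`Ω*(θ) = sin⁴ θ + 6 / (3 - s) · sin² θ cos² θ + 3 / ((1 - s)(3 - s)) · cos⁴ θ` (`OmS`). Comparing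
coefficients with `(sin² θ + cos² θ)² = 1` gives `Ω* ≥ 1`, and a direct computation of the angular
integral shows that `Ω̃*(φ)` is a positive multiple of `sin⁴ φ` (`OmS_Omt`).

The same coefficients come out of averaging one-dimensional Riesz kernels: up to a positive constant,
`|z|^{-s} Ω*(θ(z)) = ∫ |⟨z, e_φ⟩|^{-s} sin⁴ φ dφ` (`superpos`). Integrated against `ρ_{1D}` by
Tonelli, each direction contributes `|sin φ|^{4 - s} 𝒰(x₂ + x₁ cot φ)`, where `𝒰` is the potential of
`ρ₁` on the line for the kernel `|t|^{-s}` (`Vsing_swap`).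

On the line, `𝒰(t) + t² = R₁² / s` for `|t| ≤ R₁`, and `𝒰(t) + t² ≥ R₁² / s` for all `t`
(`segPot_in`, `segPot_ge`). This follows by writing `(R² - u²)^{(1 + s)/2}` as a superposition of the
densities `(r² - u²)^{(s - 1)/2}`, `r < R` (`segPot_eq`), whose potential is constant on `(-r, r)`
(`arcPot_in`) and not larger outside.

Averaging the inequality over `φ`, the quadratic terms become `x₂² + x₁² / (3 - s)`, which is at most
`|x|²`; hence the singular potential plus `|x|²` is at least `R₁² / s` everywhere (`Vsing_ge`). On
the vertical axis `Ω* = 1`, so there is equality on the segment containing the support of `ρ_{1D}`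
(`Vsing_axis`). The remaining quadratic part of the potential is `|x|²` plus a constant, because
`ρ₁` has mass one and is centered (`quad_part`). All of this is done with `[0, ∞]`-valued integrals;
finiteness of the potential (`Vsing_ne_top`) then allows the passage to the Bochner integrals.
-/

open MeasureTheory Real Filter Set Topology
open scoped ENNReal

noncomputable section

namespace Aniso

/-- The Euclidean norm on `ℝ × ℝ`. -/
def nrm (x : ℝ × ℝ) : ℝ := Real.sqrt (x.1 ^ 2 + x.2 ^ 2)

/-- The angle `θ(x) ∈ [-π, π)` of a nonzero point `x ∈ ℝ²`,
so that `x / |x| = (cos (ang x), sin (ang x))`. -/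
def ang (x : ℝ × ℝ) : ℝ :=
  if Complex.arg ⟨x.1, x.2⟩ = π then -π else Complex.arg ⟨x.1, x.2⟩

/-- The unit vector `e_φ = (cos φ, sin φ)`. -/
def eVec (φ : ℝ) : ℝ × ℝ := (Real.cos φ, Real.sin φ)

/-- The constant `τ_s = (2π)^{-s} Γ(s) cos(sπ/2)`. -/
def tauC (s : ℝ) : ℝ := (2 * π) ^ (-s) * Real.Gamma s * Real.cos (s * π / 2)

/-- The constant `c_s = π^{s-1} Γ((2-s)/2) / Γ(s/2)`. -/
def cC (s : ℝ) : ℝ := π ^ (s - 1) * Real.Gamma ((2 - s) / 2) / Real.Gamma (s / 2)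

/-- Hypothesis (H): `Ω` is smooth, 2π-periodic, strictly positive and π-periodic. -/
def SatisfiesH (Ω : ℝ → ℝ) : Prop :=
  ContDiff ℝ (⊤ : ℕ∞) Ω ∧ (∀ θ, Ω (θ + 2 * π) = Ω θ) ∧ (∀ θ, 0 < Ω θ) ∧ ∀ θ, Ω (θ + π) = Ω θ

/-- Hypothesis (h): `ω` is smooth, 2π-periodic, nonnegative, not identically zero,
π-periodic, and `ω(π/2) = 0`. -/
def Satisfiesh (ω : ℝ → ℝ) : Prop :=
  ContDiff ℝ (⊤ : ℕ∞) ω ∧ (∀ θ, ω (θ + 2 * π) = ω θ) ∧ (∀ θ, 0 ≤ ω θ) ∧ (∃ θ, ω θ ≠ 0) ∧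
    (∀ θ, ω (θ + π) = ω θ) ∧ ω (π / 2) = 0

/-- The transformed angle function `Ω̃`. -/
def Omt (s : ℝ) (Ω : ℝ → ℝ) (φ : ℝ) : ℝ :=
  tauC (2 - s) * (∫ θ in (-π)..π, |Real.cos (φ - θ)| ^ (-2 + s) * (Ω θ - Ω (φ + π / 2)))
    + cC s * Ω (φ + π / 2)

/-- The interaction potential `W(x) = |x|^{-s} Ω(θ(x)) + |x|²` as an `[0,∞]`-valued
kernel, with `W(0) = ∞`. -/
def Wkernel (s : ℝ) (Ω : ℝ → ℝ) (x : ℝ × ℝ) : ℝ≥0∞ :=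
  if x = 0 then ⊤ else ENNReal.ofReal (nrm x ^ (-s) * Ω (ang x) + nrm x ^ 2)

/-- The interaction energy `E[ρ] = (1/2) ∬ W(x-y) dρ(y) dρ(x) ∈ [0,∞]`. -/
def energy (s : ℝ) (Ω : ℝ → ℝ) (ρ : Measure (ℝ × ℝ)) : ℝ≥0∞ :=
  (1 / 2 : ℝ≥0∞) * ∫⁻ x, ∫⁻ y, Wkernel s Ω (x - y) ∂ρ ∂ρ

/-- The real-valued interaction potential (with junk value `0` at the origin,
which is Lebesgue negligible). -/
def Wr (s : ℝ) (Ω : ℝ → ℝ) (x : ℝ × ℝ) : ℝ := nrm x ^ (-s) * Ω (ang x) + nrm x ^ 2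

/-- `ρ` minimizes the energy `E` among probability measures on `ℝ²`. -/
def IsMinimizer (E : Measure (ℝ × ℝ) → ℝ≥0∞) (ρ : Measure (ℝ × ℝ)) : Prop :=
  IsProbabilityMeasure ρ ∧ ∀ μ : Measure (ℝ × ℝ), IsProbabilityMeasure μ → E ρ ≤ E μ

/-- `ρ` is the unique minimizer of `E` up to translation: it is a minimizer and every
minimizer is a translate of it. -/
def IsUniqueMinimizer (E : Measure (ℝ × ℝ) → ℝ≥0∞) (ρ : Measure (ℝ × ℝ)) : Prop :=
  IsMinimizer E ρ ∧ ∀ μ, IsMinimizer E μ → ∃ v : ℝ × ℝ, μ = Measure.map (fun x => x + v) ρ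

def R2 (s : ℝ) : ℝ := (8 * Real.sin (s * π / 2) / (s ^ 2 * (2 + s) * π)) ^ (-(1 / (s + 2)))

def C2 (s : ℝ) : ℝ := 4 * Real.sin (s * π / 2) / (s ^ 2 * π ^ 2)

/-- The density `ρ₂(x) = C₂ (R₂² - |x|²)₊^{s/2}`. -/
def rho2 (s : ℝ) (x : ℝ × ℝ) : ℝ := C2 s * (max (R2 s ^ 2 - nrm x ^ 2) 0) ^ (s / 2)

def rho2meas (s : ℝ) : Measure (ℝ × ℝ) := volume.withDensity fun x => ENNReal.ofReal (rho2 s x)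

/-- Counterclockwise rotation of `ℝ²` by the angle `η`. -/
def Rot (η : ℝ) (x : ℝ × ℝ) : ℝ × ℝ :=
  (x.1 * Real.cos η - x.2 * Real.sin η, x.1 * Real.sin η + x.2 * Real.cos η)

/-- The measure `ρ_{a,b,η}`: the pushforward of `ρ₂(x) dx` under `x ↦ R_η (a x₁, b x₂)`. -/
def rhoE (s a b η : ℝ) : Measure (ℝ × ℝ) :=
  Measure.map (fun x => Rot η (a * x.1, b * x.2)) (rho2meas s)

/-- The measure `ρ_{a,b} = ρ_{a,b,0}`. -/
def rhoAB (s a b : ℝ) : Measure (ℝ × ℝ) := rhoE s a b 0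

/-- The Beta function. -/
def BetaR (x y : ℝ) : ℝ := Real.Gamma x * Real.Gamma y / Real.Gamma (x + y)

def C1 (s : ℝ) : ℝ := 2 * Real.cos (s * π / 2) / (s * (s + 1) * π)

def R1 (s : ℝ) : ℝ := (C1 s * BetaR (1 / 2) ((3 + s) / 2)) ^ (-(1 / (s + 2)))

/-- The density `ρ₁(t) = C₁ (R₁² - t²)₊^{(1+s)/2}` on `ℝ`. -/
def rho1 (s t : ℝ) : ℝ := C1 s * (max (R1 s ^ 2 - t ^ 2) 0) ^ ((1 + s) / 2)

def rho1meas (s : ℝ) : Measure ℝ := volume.withDensity fun t => ENNReal.ofReal (rho1 s t)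

/-- The measure `ρ_{1D}`: the pushforward of `ρ₁(t) dt` under `t ↦ (0, t)`. -/
def rho1D (s : ℝ) : Measure (ℝ × ℝ) := Measure.map (fun t : ℝ => ((0 : ℝ), t)) (rho1meas s)

/-- The support of a measure: points all of whose neighborhoods have positive measure. -/
def msupport {α : Type*} [TopologicalSpace α] [MeasurableSpace α] (μ : Measure α) : Set α :=
  {x | ∀ U ∈ 𝓝 x, 0 < μ U}

def Acoef (s : ℝ) (Ω : ℝ → ℝ) (a b : ℝ) : ℝ :=
  tauC s * (R1 s / R2 s) ^ (2 + s) *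
    ∫ φ in (-π)..π,
      (a ^ 2 * Real.cos φ ^ 2 + b ^ 2 * Real.sin φ ^ 2) ^ (-(2 + s) / 2) *
        Real.cos φ ^ 2 * Omt s Ω φ

def Bcoef (s : ℝ) (Ω : ℝ → ℝ) (a b : ℝ) : ℝ :=
  tauC s * (R1 s / R2 s) ^ (2 + s) *
    ∫ φ in (-π)..π,
      (a ^ 2 * Real.cos φ ^ 2 + b ^ 2 * Real.sin φ ^ 2) ^ (-(2 + s) / 2) *
        Real.sin φ ^ 2 * Omt s Ω φ

def Dcoef (s : ℝ) (Ω : ℝ → ℝ) (a b : ℝ) : ℝ :=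
  tauC s * (R1 s / R2 s) ^ (2 + s) *
    ∫ φ in (-π)..π,
      (a ^ 2 * Real.cos φ ^ 2 + b ^ 2 * Real.sin φ ^ 2) ^ (-(2 + s) / 2) *
        (Real.cos φ * Real.sin φ) * Omt s Ω φ

def Mfun (s : ℝ) (Ω : ℝ → ℝ) (a b : ℝ) : ℝ :=
  tauC s * (R1 s / R2 s) ^ (2 + s) *
    ∫ φ in (-π)..π, (a ^ 2 * Real.cos φ ^ 2 + b ^ 2 * Real.sin φ ^ 2) ^ (-s / 2) * Omt s Ω φ

def calE (s : ℝ) (Ω : ℝ → ℝ) (a b : ℝ) : ℝ := Mfun s Ω a b + s / 2 * (a ^ 2 + b ^ 2)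

/-- A measure has compact support. -/
def HasCompactSupportM (ρ : Measure (ℝ × ℝ)) : Prop :=
  ∃ K : Set (ℝ × ℝ), IsCompact K ∧ ρ Kᶜ = 0

/-- The linear interpolation `(1-t) ρ₀ + t ρ₁`. -/
def mix (ρ₀ ρ₁ : Measure (ℝ × ℝ)) (t : ℝ) : Measure (ℝ × ℝ) :=
  ENNReal.ofReal (1 - t) • ρ₀ + ENNReal.ofReal t • ρ₁

/-- Linear interpolation convexity (LIC): for any two distinct compactly supported
probability measures of finite energy with the same center of mass, the energy is
strictly convex along their linear interpolation. -/
def LIC (s : ℝ) (Ω : ℝ → ℝ) : Prop :=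
  ∀ ρ₀ ρ₁ : Measure (ℝ × ℝ), IsProbabilityMeasure ρ₀ → IsProbabilityMeasure ρ₁ →
    HasCompactSupportM ρ₀ → HasCompactSupportM ρ₁ →
    energy s Ω ρ₀ < ⊤ → energy s Ω ρ₁ < ⊤ → ρ₀ ≠ ρ₁ →
    (∫ x, x ∂ρ₀) = (∫ x, x ∂ρ₁) →
    StrictConvexOn ℝ (Set.Icc (0 : ℝ) 1) fun t => (energy s Ω (mix ρ₀ ρ₁ t)).toReal

/-- The interaction energy of a bounded compactly supported signed density. -/
def energyR (s : ℝ) (Ω : ℝ → ℝ) (μ : ℝ × ℝ → ℝ) : ℝ :=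
  (1 / 2) * ∫ x : ℝ × ℝ, (∫ y : ℝ × ℝ, Wr s Ω (x - y) * μ y) * μ x

/-- The logarithmic potential `W_log(x) = -ln|x| + Ω(θ(x)) + |x|²` (real valued,
with junk value at the origin). -/
def Wlog (Ω : ℝ → ℝ) (x : ℝ × ℝ) : ℝ := -Real.log (nrm x) + Ω (ang x) + nrm x ^ 2

def WlogKernel (Ω : ℝ → ℝ) (x : ℝ × ℝ) : ℝ≥0∞ :=
  if x = 0 then ⊤ else ENNReal.ofReal (Wlog Ω x)

/-- The logarithmic interaction energy. -/
def energyLog (Ω : ℝ → ℝ) (ρ : Measure (ℝ × ℝ)) : ℝ≥0∞ :=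
  (1 / 2 : ℝ≥0∞) * ∫⁻ x, ∫⁻ y, WlogKernel Ω (x - y) ∂ρ ∂ρ

/-- The family `W_{(s)}(x) = |x|^{-s} (1/s + Ω(θ(x))) - 1/s + |x|²`. -/
def Wsfam (s : ℝ) (Ω : ℝ → ℝ) (x : ℝ × ℝ) : ℝ :=
  nrm x ^ (-s) * (1 / s + Ω (ang x)) - 1 / s + nrm x ^ 2

/-- The transformed angle function of `W_{(s)}`. -/
def Omts (s : ℝ) (Ω : ℝ → ℝ) (φ : ℝ) : ℝ :=
  tauC (2 - s) * (∫ θ in (-π)..π, |Real.cos (φ - θ)| ^ (-2 + s) * (Ω θ - Ω (φ + π / 2)))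
    + cC s * (1 / s + Ω (φ + π / 2))

/-- The truncated integral appearing in the principal value defining `Ω̃_log`. -/
def pvInt (Ω : ℝ → ℝ) (φ δ : ℝ) : ℝ :=
  ∫ θ in {θ : ℝ | θ ∈ Set.Icc (-π) π ∧ δ ≤ |Real.cos (φ - θ)|},
    |Real.cos (φ - θ)| ^ (-(2 : ℝ)) * (Ω θ - Ω (φ + π / 2))

def OmtLogFam (Ω : ℝ → ℝ) (φ δ : ℝ) : ℝ :=
  -((2 * π) ^ (-(2 : ℝ))) * pvInt Ω φ δ + (2 * π)⁻¹

/-- The transformed angle function `Ω̃_log`, defined as the principal value limit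
(via `limUnder`, which returns the limit whenever it exists). -/
def OmtLog (Ω : ℝ → ℝ) (φ : ℝ) : ℝ := limUnder (𝓝[>] (0 : ℝ)) (OmtLogFam Ω φ)

/-- The closed elliptical region `B(0; a, b)`. -/
def ellipseSet (a b : ℝ) : Set (ℝ × ℝ) := {x | x.1 ^ 2 / a ^ 2 + x.2 ^ 2 / b ^ 2 ≤ 1}

def ALog (Ω : ℝ → ℝ) (a b : ℝ) : ℝ :=
  ∫ φ in (-π)..π,
    (a ^ 2 * Real.cos φ ^ 2 + b ^ 2 * Real.sin φ ^ 2)⁻¹ * Real.cos φ ^ 2 * OmtLog Ω φ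

def BLog (Ω : ℝ → ℝ) (a b : ℝ) : ℝ :=
  ∫ φ in (-π)..π,
    (a ^ 2 * Real.cos φ ^ 2 + b ^ 2 * Real.sin φ ^ 2)⁻¹ * Real.sin φ ^ 2 * OmtLog Ω φ

def DLog (Ω : ℝ → ℝ) (a b : ℝ) : ℝ :=
  ∫ φ in (-π)..π,
    (a ^ 2 * Real.cos φ ^ 2 + b ^ 2 * Real.sin φ ^ 2)⁻¹ *
      (Real.cos φ * Real.sin φ) * OmtLog Ω φ

/-- The uniform probability measure on the rotated ellipse `B(0; a, b, η)`. -/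
def unifEllipse (a b η : ℝ) : Measure (ℝ × ℝ) :=
  volume.withDensity ((Rot η '' ellipseSet a b).indicator fun _ => ENNReal.ofReal ((π * a * b)⁻¹))

/-- The pushforward of the density `(2/(πb²)) (b² - t²)₊^{1/2} dt` under `t ↦ R_η (0, t)`. -/
def semicirc (b η : ℝ) : Measure (ℝ × ℝ) :=
  Measure.map (fun t : ℝ => Rot η (0, t))
    (volume.withDensity fun t =>
      ENNReal.ofReal (2 / (π * b ^ 2) * (max (b ^ 2 - t ^ 2) 0) ^ ((1 : ℝ) / 2)))

/-- The vertical semicircle measure `ρ_{1D}` for the logarithmic case. -/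
def rho1Dlog : Measure (ℝ × ℝ) :=
  Measure.map (fun t : ℝ => ((0 : ℝ), t))
    (volume.withDensity fun t => ENNReal.ofReal (2 / π * (max (1 - t ^ 2) 0) ^ ((1 : ℝ) / 2)))

/-- The measure `ψ(t) dt` placed on the vertical axis. -/
def rhoPsi (ψ : ℝ → ℝ) : Measure (ℝ × ℝ) :=
  Measure.map (fun t : ℝ => ((0 : ℝ), t)) (volume.withDensity fun t => ENNReal.ofReal (ψ t))


/-! ### Beta integrals -/

/-- Change of variables `y = f x` for nonnegative integrands, with an explicit inverse `k`. -/
theorem lint_cov {S T : Set ℝ} (hS : MeasurableSet S) (f f' k : ℝ → ℝ)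
    (hmap : ∀ x ∈ S, f x ∈ T) (hk : ∀ y ∈ T, k y ∈ S) (hfk : ∀ y ∈ T, f (k y) = y)
    (hkf : ∀ x ∈ S, k (f x) = x) (hd : ∀ x ∈ S, HasDerivAt f (f' x) x) (g h : ℝ → ℝ)
    (hgh : ∀ x ∈ S, |f' x| * g (f x) = h x) :
    ∫⁻ y in T, ENNReal.ofReal (g y) = ∫⁻ x in S, ENNReal.ofReal (h x) := by
  have hT : T = f '' S := by
    ext y
    constructor
    · intro hy
      exact ⟨k y, hk y hy, hfk y hy⟩
    · rintro ⟨x, hx, rfl⟩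
      exact hmap x hx
  have hinj : InjOn f S := by
    intro x hx y hy hxy
    rw [← hkf x hx, ← hkf y hy, hxy]
  rw [hT, lintegral_image_eq_lintegral_abs_deriv_mul hS
    (fun x hx => (hd x hx).hasDerivWithinAt) hinj]
  refine setLIntegral_congr_fun hS fun x hx => ?_
  rw [← ENNReal.ofReal_mul (abs_nonneg _), hgh x hx]

theorem BetaR_pos {a b : ℝ} (ha : 0 < a) (hb : 0 < b) : 0 < BetaR a b :=
  ProbabilityTheory.beta_pos ha hb

/-- Euler's Beta integral. -/
theorem lint_beta {a b : ℝ} (ha : 0 < a) (hb : 0 < b) :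
    ∫⁻ x in Ioo (0 : ℝ) 1, ENNReal.ofReal (x ^ (a - 1) * (1 - x) ^ (b - 1))
      = ENNReal.ofReal (BetaR a b) := by
  have hB : 0 < BetaR a b := BetaR_pos ha hb
  have h1 := ProbabilityTheory.lintegral_betaPDF_eq_one ha hb
  rw [ProbabilityTheory.lintegral_betaPDF] at h1
  have h2 : ∀ x ∈ Ioo (0 : ℝ) 1, ENNReal.ofReal (x ^ (a - 1) * (1 - x) ^ (b - 1)) =
      ENNReal.ofReal (BetaR a b) * ENNReal.ofReal
        (1 / ProbabilityTheory.beta a b * x ^ (a - 1) * (1 - x) ^ (b - 1)) := by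
    intro x hx
    rw [← ENNReal.ofReal_mul hB.le]
    congr 1
    have : ProbabilityTheory.beta a b = BetaR a b := rfl
    rw [this]
    field_simp
  rw [setLIntegral_congr_fun measurableSet_Ioo h2, lintegral_const_mul' _ _ ENNReal.ofReal_ne_top,
    h1, mul_one]

/-- The Beta integral transported to the interval `(-R, R)`. -/
theorem lint_beta_sym {a b R : ℝ} (ha : 0 < a) (hb : 0 < b) (hR : 0 < R) :
    ∫⁻ u in Ioo (-R) R, ENNReal.ofReal ((R - u) ^ (a - 1) * (R + u) ^ (b - 1))
      = ENNReal.ofReal ((2 * R) ^ (a + b - 1) * BetaR a b) := by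
  rw [ENNReal.ofReal_mul (by positivity), ← lint_beta ha hb,
    ← lintegral_const_mul' _ _ ENNReal.ofReal_ne_top]
  simp_rw [← ENNReal.ofReal_mul (show 0 ≤ (2 * R) ^ (a + b - 1) by positivity)]
  refine lint_cov measurableSet_Ioo (fun x => R - 2 * R * x) (fun _ => -(2 * R))
    (fun u => (R - u) / (2 * R)) ?_ ?_ ?_ ?_ ?_ _ _ ?_
  · rintro x ⟨h0, h1⟩
    constructor <;> nlinarith
  · rintro x ⟨h0, h1⟩
    constructor
    · exact div_pos (by linarith) (by linarith)
    · rw [div_lt_one (by linarith)]; linarith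
  · intro x _
    field_simp
    ring
  · intro x _
    field_simp
    ring
  · intro x _
    simpa using ((hasDerivAt_id x).const_mul (2 * R)).const_sub R
  · rintro x ⟨h0, h1⟩
    have e1 : R - (R - 2 * R * x) = (2 * R) * x := by ring
    have e2 : R + (R - 2 * R * x) = (2 * R) * (1 - x) := by ring
    simp only [abs_neg]
    rw [e1, e2, abs_of_pos (by positivity), mul_rpow (x := 2 * R) (y := x) (by positivity) h0.le,
      mul_rpow (x := 2 * R) (y := 1 - x) (by positivity) (by linarith),
      show a + b - 1 = 1 + (a - 1) + (b - 1) by ring, rpow_add (by positivity),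
      rpow_add (by positivity), rpow_one]
    ring

/-- Legendre's duplication formula, written for the Beta function. -/
theorem BetaR_dup {q : ℝ} (hq : 0 < q) :
    (2 : ℝ) ^ (2 * q - 1) * BetaR q q = BetaR (1 / 2) q := by
  have h := Real.Gamma_mul_Gamma_add_half q
  have h1 : 0 < Real.Gamma q := Gamma_pos_of_pos hq
  have h2 : 0 < Real.Gamma (q + 1 / 2) := Gamma_pos_of_pos (by linarith)
  have h3 : 0 < Real.Gamma (2 * q) := Gamma_pos_of_pos (by linarith)
  have h4 : (2 : ℝ) ^ (2 * q - 1) * 2 ^ (1 - 2 * q) = 1 := by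
    rw [← rpow_add (by norm_num)]
    simp
  unfold BetaR
  rw [Real.Gamma_one_half_eq, show q + q = 2 * q by ring, show 1 / 2 + q = q + 1 / 2 by ring,
    mul_div_assoc', div_eq_div_iff h3.ne' h2.ne']
  calc (2 : ℝ) ^ (2 * q - 1) * (Real.Gamma q * Real.Gamma q) * Real.Gamma (q + 1 / 2)
      = (2 : ℝ) ^ (2 * q - 1) * Real.Gamma q * (Real.Gamma q * Real.Gamma (q + 1 / 2)) := by ring
    _ = ((2 : ℝ) ^ (2 * q - 1) * 2 ^ (1 - 2 * q)) *
        (√π * Real.Gamma q * Real.Gamma (2 * q)) := by rw [h]; ring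
    _ = _ := by rw [h4, one_mul]

theorem BetaR_half_succ {q : ℝ} (hq : 0 < q) :
    BetaR (1 / 2) (q + 1) = q / (q + 1 / 2) * BetaR (1 / 2) q := by
  unfold BetaR
  rw [show (1 : ℝ) / 2 + (q + 1) = (1 / 2 + q) + 1 by ring, Gamma_add_one hq.ne',
    Gamma_add_one (by positivity)]
  have h2 : 0 < Real.Gamma (1 / 2 + q) := Gamma_pos_of_pos (by linarith)
  field_simp
  ring

/-- The constant `g = π / cos (sπ/2)`, the value of the potential of the arcsine-type density. -/
def gC (s : ℝ) : ℝ := π / Real.cos (s * π / 2)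

theorem cos_pos_of {s : ℝ} (hs0 : 0 < s) (hs1 : s < 1) : 0 < Real.cos (s * π / 2) := by
  apply Real.cos_pos_of_mem_Ioo
  constructor <;> nlinarith [pi_pos]

theorem gC_pos {s : ℝ} (hs0 : 0 < s) (hs1 : s < 1) : 0 < gC s :=
  div_pos pi_pos (cos_pos_of hs0 hs1)

theorem Gamma_refl (s : ℝ) :
    Real.Gamma ((1 - s) / 2) * Real.Gamma ((1 + s) / 2) = gC s := by
  have h := Real.Gamma_mul_Gamma_one_sub ((1 - s) / 2)
  rw [show 1 - (1 - s) / 2 = (1 + s) / 2 by ring] at h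
  rw [h, gC, ← Real.cos_pi_div_two_sub]
  congr 2
  ring

theorem BetaR_refl (s : ℝ) : BetaR ((1 - s) / 2) ((1 + s) / 2) = gC s := by
  unfold BetaR
  rw [Gamma_refl, show (1 - s) / 2 + (1 + s) / 2 = 1 by ring, Gamma_one, div_one]

theorem BetaR_refl_three {s : ℝ} (hs0 : 0 < s) (hs1 : s < 1) :
    BetaR ((3 - s) / 2) ((3 + s) / 2) = (1 - s ^ 2) / 8 * gC s := by
  unfold BetaR
  rw [← Gamma_refl, show (3 - s) / 2 + (3 + s) / 2 = 2 + 1 by ring,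
    show (3 - s) / 2 = (1 - s) / 2 + 1 by ring, show (3 + s) / 2 = (1 + s) / 2 + 1 by ring,
    Gamma_add_one (by linarith), Gamma_add_one (by linarith), Gamma_add_one (by norm_num),
    Gamma_two]
  ring

/-! ### The arcsine-type density and its one-dimensional Riesz potential -/

/-- Folding a nonnegative integral over `(-R, R)` onto `(0, R)`. -/
theorem lint_fold {R : ℝ} (hR : 0 < R) (F : ℝ → ℝ) (hF : Measurable F)
    (h0 : ∀ v ∈ Ioo (-R) R, 0 ≤ F v) :
    ∫⁻ v in Ioo (-R) R, ENNReal.ofReal (F v) =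
      ∫⁻ v in Ioo 0 R, ENNReal.ofReal (F v + F (-v)) := by
  have hU : Ioo (-R) R = Ioo (-R) 0 ∪ Ico 0 R := (Ioo_union_Ico_eq_Ioo (by linarith) hR.le).symm
  have hdis : Disjoint (Ioo (-R) 0) (Ico 0 R) := by
    rw [Set.disjoint_left]
    rintro x ⟨_, h⟩ ⟨h', _⟩
    linarith
  have hneg : ∫⁻ v in Ioo (-R) 0, ENNReal.ofReal (F v) =
      ∫⁻ v in Ioo 0 R, ENNReal.ofReal (F (-v)) := by
    refine lint_cov measurableSet_Ioo (fun x => -x) (fun _ => -1) (fun x => -x) ?_ ?_ ?_ ?_ ?_ _ _ ?_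
    · rintro x ⟨h0, h1⟩; constructor <;> linarith
    · rintro x ⟨h0, h1⟩; constructor <;> linarith
    · intro x _; simp
    · intro x _; simp
    · intro x _; exact hasDerivAt_neg x
    · intro x _; simp
  rw [hU, lintegral_union measurableSet_Ico hdis, hneg, setLIntegral_congr Ioo_ae_eq_Ico.symm, add_comm,
    ← lintegral_add_left hF.ennreal_ofReal]
  refine setLIntegral_congr_fun measurableSet_Ioo fun x hx => ?_
  refine (ENNReal.ofReal_add (h0 x ?_) (h0 _ ?_)).symm
  · exact ⟨by linarith [hx.1, hx.2], hx.2⟩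
  · exact ⟨by linarith [hx.1, hx.2], by linarith [hx.1, hx.2]⟩

/-- The potential of the arcsine-type density `(1 - u²)^((s-1)/2)` on `(-1, 1)` for the
kernel `|t|^(-s)`. -/
def arcPot (s t : ℝ) : ℝ≥0∞ :=
  ∫⁻ u in Ioo (-1 : ℝ) 1, ENNReal.ofReal (|t - u| ^ (-s) * (1 - u ^ 2) ^ ((s - 1) / 2))

theorem arcPot_neg (s t : ℝ) : arcPot s (-t) = arcPot s t := by
  unfold arcPot
  refine lint_cov measurableSet_Ioo (fun x => -x) (fun _ => -1) (fun x => -x) ?_ ?_ ?_ ?_ ?_ _ _ ?_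
  · rintro x ⟨h0, h1⟩; constructor <;> linarith
  · rintro x ⟨h0, h1⟩; constructor <;> linarith
  · intro x _; simp
  · intro x _; simp
  · intro x _; exact hasDerivAt_neg x
  · intro x _
    rw [show -t - -x = -(t - x) by ring, abs_neg (t - x)]
    simp

theorem arcPot_one {s : ℝ} (hs0 : 0 < s) (hs1 : s < 1) : arcPot s 1 = ENNReal.ofReal (gC s) := by
  have h := lint_beta_sym (a := (1 - s) / 2) (b := (1 + s) / 2) (by linarith) (by linarith)
    one_pos
  rw [BetaR_refl, show (1 - s) / 2 + (1 + s) / 2 - 1 = 0 by ring, rpow_zero, one_mul] at h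
  rw [← h]
  refine setLIntegral_congr_fun measurableSet_Ioo fun u hu => ?_
  have h1 : 0 < 1 - u := by linarith [hu.2]
  have h2 : 0 < 1 + u := by linarith [hu.1]
  rw [abs_of_pos h1, show 1 - u ^ 2 = (1 - u) * (1 + u) by ring, mul_rpow h1.le h2.le,
    ← mul_assoc, ← rpow_add h1]
  congr 3 <;> ring_nf

theorem arcPot_out {s t : ℝ} (hs0 : 0 < s) (hs1 : s < 1) (ht : 1 ≤ t) :
    arcPot s t ≤ ENNReal.ofReal (gC s) := by
  rw [← arcPot_one hs0 hs1]
  refine setLIntegral_mono' measurableSet_Ioo fun u hu => ENNReal.ofReal_le_ofReal ?_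
  have h1 : 0 < 1 - u := by linarith [hu.2]
  have h2 : 0 < 1 + u := by linarith [hu.1]
  have h3 : 0 < t - u := by linarith
  rw [abs_of_pos h1, abs_of_pos h3]
  refine mul_le_mul_of_nonneg_right ?_ (rpow_nonneg (by nlinarith) _)
  exact rpow_le_rpow_of_nonpos h1 (by linarith) (by linarith)

/-- The potential is constant on `(-1, 1)`: the Möbius map `v ↦ (v + t) / (1 + t v)` followed by
symmetrization in `v` and the substitution `w = (1 - t²) v² / (1 - t² v²)` turns it into a Beta
integral that does not depend on `t`. -/
theorem arcPot_in {s t : ℝ} (hs0 : 0 < s) (hs1 : s < 1) (ht : |t| < 1) :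
    arcPot s t = ENNReal.ofReal (gC s) := by
  obtain ⟨ht1, ht2⟩ := abs_lt.mp ht
  have hT : 0 < 1 - t ^ 2 := by nlinarith
  have hpos : ∀ v ∈ Ioo (-1 : ℝ) 1, 0 < 1 + t * v := by
    rintro v ⟨h1, h2⟩
    nlinarith [mul_pos (by linarith : 0 < 1 + t) (by linarith : 0 < 1 + v),
      mul_pos (by linarith : 0 < 1 - t) (by linarith : 0 < 1 - v)]
  have hpos' : ∀ v ∈ Ioo (-1 : ℝ) 1, 0 < 1 - t * v := by
    rintro v ⟨h1, h2⟩
    nlinarith [mul_pos (by linarith : 0 < 1 + t) (by linarith : 0 < 1 - v),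
      mul_pos (by linarith : 0 < 1 - t) (by linarith : 0 < 1 + v)]
  have step1 : arcPot s t = ∫⁻ v in Ioo (-1 : ℝ) 1, ENNReal.ofReal
      ((1 - t ^ 2) ^ ((1 - s) / 2) * |v| ^ (-s) * (1 - v ^ 2) ^ ((s - 1) / 2) / (1 + t * v)) := by
    unfold arcPot
    refine lint_cov measurableSet_Ioo (fun v => (v + t) / (1 + t * v))
      (fun v => (1 - t ^ 2) / (1 + t * v) ^ 2) (fun u => (u - t) / (1 - t * u)) ?_ ?_ ?_ ?_ ?_ _ _ ?_
    · intro v hv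
      have h := hpos v hv
      obtain ⟨h1, h2⟩ := hv
      constructor
      · rw [lt_div_iff₀ h]
        nlinarith [mul_pos (by linarith : 0 < 1 + t) (by linarith : 0 < 1 + v)]
      · rw [div_lt_iff₀ h]
        nlinarith [mul_pos (by linarith : 0 < 1 - t) (by linarith : 0 < 1 - v)]
    · intro v hv
      have h := hpos' v hv
      obtain ⟨h1, h2⟩ := hv
      constructor
      · rw [lt_div_iff₀ h]
        nlinarith [mul_pos (by linarith : 0 < 1 - t) (by linarith : 0 < 1 + v)]
      · rw [div_lt_iff₀ h]
        nlinarith [mul_pos (by linarith : 0 < 1 + t) (by linarith : 0 < 1 - v)]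
    · intro v hv
      have h := hpos' v hv
      have h2 : (1 - t * v) + t * (v - t) = 1 - t ^ 2 := by ring
      have h3 : 1 + t * ((v - t) / (1 - t * v)) = (1 - t ^ 2) / (1 - t * v) := by
        rw [← h2]; field_simp
      have h4 : (v - t) / (1 - t * v) + t = v * (1 - t ^ 2) / (1 - t * v) := by
        rw [eq_div_iff h.ne', add_mul, div_mul_cancel₀ _ h.ne']; ring
      rw [h3, h4, div_div_div_cancel_right₀ h.ne', mul_div_cancel_right₀ _ hT.ne']
    · intro v hv
      have h := hpos v hv
      have h3 : 1 - t * ((v + t) / (1 + t * v)) = (1 - t ^ 2) / (1 + t * v) := by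
        field_simp; ring
      have h4 : (v + t) / (1 + t * v) - t = v * (1 - t ^ 2) / (1 + t * v) := by
        rw [eq_div_iff h.ne', sub_mul, div_mul_cancel₀ _ h.ne']; ring
      rw [h3, h4, div_div_div_cancel_right₀ h.ne', mul_div_cancel_right₀ _ hT.ne']
    · intro v hv
      have h := hpos v hv
      have := ((hasDerivAt_id v).add_const t).div (((hasDerivAt_id v).const_mul t).const_add 1) h.ne'
      refine this.congr_deriv ?_
      simp only [id]
      congr 1
      ring
    · intro v hv
      have h := hpos v hv
      obtain ⟨h1, h2⟩ := hv
      have hv2 : 0 < 1 - v ^ 2 := by nlinarith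
      have e1 : t - (v + t) / (1 + t * v) = -(v * ((1 - t ^ 2) / (1 + t * v))) := by
        field_simp; ring
      have e2 : 1 - ((v + t) / (1 + t * v)) ^ 2 = (1 - t ^ 2) * (1 - v ^ 2) / (1 + t * v) ^ 2 := by
        have h' : (1 + t * v) ^ 2 ≠ 0 := by positivity
        rw [div_pow, eq_div_iff h', sub_mul, div_mul_cancel₀ _ h']; ring
      rw [e1, e2, abs_neg, abs_mul, abs_of_pos (show 0 < (1 - t ^ 2) / (1 + t * v) by positivity),
        abs_of_pos (show 0 < (1 - t ^ 2) / (1 + t * v) ^ 2 by positivity),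
        mul_rpow (abs_nonneg v) (by positivity), div_rpow hT.le h.le,
        div_rpow (by positivity) (by positivity), mul_rpow hT.le hv2.le]
      have e3 : ((1 + t * v) ^ 2) ^ ((s - 1) / 2) = (1 + t * v) ^ (s - 1) := by
        rw [← rpow_natCast, ← rpow_mul h.le]; congr 1; push_cast; ring
      have e4 : (1 + t * v) ^ (s - 1) = (1 + t * v) ^ s / (1 + t * v) := by
        rw [rpow_sub h, rpow_one]
      have e5 : (1 + t * v) ^ (-s) = ((1 + t * v) ^ s)⁻¹ := rpow_neg h.le s
      have e6 : (1 - t ^ 2) ^ ((1 - s) / 2) =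
          (1 - t ^ 2) * (1 - t ^ 2) ^ (-s) * (1 - t ^ 2) ^ ((s - 1) / 2) := by
        have e : (1 - s) / 2 = 1 + (-s) + (s - 1) / 2 := by ring
        rw [e, rpow_add hT, rpow_add hT, rpow_one]
      rw [e3, e4, e5, e6]
      have := rpow_pos_of_pos h s
      field_simp
  rw [step1, lint_fold one_pos _ (by fun_prop), ← BetaR_refl s,
    ← lint_beta (a := (1 - s) / 2) (b := (1 + s) / 2) (by linarith) (by linarith)]
  swap
  · intro v hv
    have := hpos v hv
    have hv2 : 0 ≤ 1 - v ^ 2 := by nlinarith [hv.1, hv.2]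
    positivity
  have hq : ∀ v ∈ Ioo (0 : ℝ) 1, 0 < 1 - t ^ 2 * v ^ 2 := by
    rintro v ⟨h1, h2⟩
    nlinarith [mul_nonneg (sq_nonneg t) (by nlinarith : 0 ≤ 1 - v ^ 2)]
  have hq' : ∀ w ∈ Ioo (0 : ℝ) 1, 0 < 1 - t ^ 2 + t ^ 2 * w := by
    rintro w ⟨h1, h2⟩
    nlinarith [mul_nonneg (sq_nonneg t) h1.le]
  symm
  refine lint_cov measurableSet_Ioo (fun v => (1 - t ^ 2) * v ^ 2 / (1 - t ^ 2 * v ^ 2))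
      (fun v => 2 * (1 - t ^ 2) * v / (1 - t ^ 2 * v ^ 2) ^ 2)
      (fun w => √(w / (1 - t ^ 2 + t ^ 2 * w))) ?_ ?_ ?_ ?_ ?_ _ _ ?_
  · intro v hv
    have h := hq v hv
    obtain ⟨h1, h2⟩ := hv
    constructor
    · positivity
    · rw [div_lt_one h]
      nlinarith
  · intro w hw
    have h := hq' w hw
    obtain ⟨h1, h2⟩ := hw
    constructor
    · exact Real.sqrt_pos.mpr (by positivity)
    · rw [Real.sqrt_lt' one_pos, one_pow, div_lt_one h]
      nlinarith
  · intro w hw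
    have h := hq' w hw
    obtain ⟨h1, h2⟩ := hw
    rw [Real.sq_sqrt (by positivity)]
    have h3 : 1 - t ^ 2 * (w / (1 - t ^ 2 + t ^ 2 * w)) = (1 - t ^ 2) / (1 - t ^ 2 + t ^ 2 * w) := by
      field_simp; ring
    rw [h3]
    field_simp
  · intro v hv
    have h := hq v hv
    obtain ⟨h1, h2⟩ := hv
    have h3 : 1 - t ^ 2 + t ^ 2 * ((1 - t ^ 2) * v ^ 2 / (1 - t ^ 2 * v ^ 2)) =
        (1 - t ^ 2) / (1 - t ^ 2 * v ^ 2) := by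
      field_simp; ring
    rw [h3, show (1 - t ^ 2) * v ^ 2 / (1 - t ^ 2 * v ^ 2) / ((1 - t ^ 2) / (1 - t ^ 2 * v ^ 2))
      = v ^ 2 by field_simp, Real.sqrt_sq h1.le]
  · intro v hv
    have h := hq v hv
    have := ((hasDerivAt_pow 2 v).const_mul (1 - t ^ 2)).div
      (((hasDerivAt_pow 2 v).const_mul (t ^ 2)).const_sub 1) h.ne'
    refine this.congr_deriv ?_
    congr 1
    push_cast
    ring
  · intro v hv
    have h := hq v hv
    have h3 := hpos v ⟨by linarith [hv.1], hv.2⟩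
    have h4 := hpos' v ⟨by linarith [hv.1], hv.2⟩
    obtain ⟨h1, h2⟩ := hv
    have hv2 : 0 < 1 - v ^ 2 := by nlinarith
    have e1 : 1 - (1 - t ^ 2) * v ^ 2 / (1 - t ^ 2 * v ^ 2) = (1 - v ^ 2) / (1 - t ^ 2 * v ^ 2) := by
      field_simp; ring
    rw [e1, abs_of_pos (show 0 < 2 * (1 - t ^ 2) * v / (1 - t ^ 2 * v ^ 2) ^ 2 by positivity),
      div_rpow (by positivity) h.le, div_rpow hv2.le h.le, mul_rpow hT.le (by positivity),
      abs_neg, abs_of_pos h1, show (-v) ^ 2 = v ^ 2 by ring,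
      show (1 + s) / 2 - 1 = (s - 1) / 2 by ring]
    have e2 : (v ^ 2) ^ ((1 - s) / 2 - 1) = v ^ (-s) / v := by
      rw [← rpow_natCast, ← rpow_mul h1.le, ← rpow_sub_one h1.ne']; congr 1; push_cast; ring
    have e3 : (1 - t ^ 2) ^ ((1 - s) / 2 - 1) = (1 - t ^ 2) ^ ((1 - s) / 2) / (1 - t ^ 2) := by
      rw [rpow_sub_one hT.ne']
    have e4 : (1 - t ^ 2 * v ^ 2) ^ ((1 - s) / 2 - 1) * (1 - t ^ 2 * v ^ 2) ^ ((s - 1) / 2)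
        = (1 - t ^ 2 * v ^ 2)⁻¹ := by
      rw [← rpow_add h, ← rpow_neg_one]; congr 1; ring
    have e5 : 1 / (1 + t * v) + 1 / (1 + t * -v) = 2 / (1 - t ^ 2 * v ^ 2) := by
      have : 1 + t * -v = 1 - t * v := by ring
      rw [this, show 1 - t ^ 2 * v ^ 2 = (1 + t * v) * (1 - t * v) by ring]
      field_simp
      ring
    rw [e2, e3]
    calc 2 * (1 - t ^ 2) * v / (1 - t ^ 2 * v ^ 2) ^ 2 *
      ((1 - t ^ 2) ^ ((1 - s) / 2) / (1 - t ^ 2) * (v ^ (-s) / v) /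
          (1 - t ^ 2 * v ^ 2) ^ ((1 - s) / 2 - 1) *
        ((1 - v ^ 2) ^ ((s - 1) / 2) / (1 - t ^ 2 * v ^ 2) ^ ((s - 1) / 2)))
        = 2 / (1 - t ^ 2 * v ^ 2) ^ 2 * ((1 - t ^ 2) ^ ((1 - s) / 2) * v ^ (-s) *
          (1 - v ^ 2) ^ ((s - 1) / 2)) * ((1 - t ^ 2 * v ^ 2) ^ ((1 - s) / 2 - 1) *
            (1 - t ^ 2 * v ^ 2) ^ ((s - 1) / 2))⁻¹ := by
          field_simp
      _ = ((1 - t ^ 2) ^ ((1 - s) / 2) * v ^ (-s) * (1 - v ^ 2) ^ ((s - 1) / 2)) *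
          (2 / (1 - t ^ 2 * v ^ 2)) := by
          rw [e4, inv_inv]; field_simp
      _ = _ := by rw [← e5]; ring

theorem arcPot_le {s : ℝ} (hs0 : 0 < s) (hs1 : s < 1) (t : ℝ) : arcPot s t ≤ ENNReal.ofReal (gC s) := by
  rcases lt_or_ge |t| 1 with h | h
  · exact (arcPot_in hs0 hs1 h).le
  · rcases le_abs.mp h with h | h
    · exact arcPot_out hs0 hs1 h
    · rw [← arcPot_neg]
      exact arcPot_out hs0 hs1 h

/-! ### The potential of a segment -/

/-- The potential on the line of the density `(R² - u²)^((1+s)/2)` on `(-R, R)` for the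
kernel `|t|^(-s)`. -/
def segPot (s R t : ℝ) : ℝ≥0∞ :=
  ∫⁻ u in Ioo (-R) R, ENNReal.ofReal (|t - u| ^ (-s) * (R ^ 2 - u ^ 2) ^ ((1 + s) / 2))

theorem lint_layer {s a R : ℝ} (hs0 : 0 < s) (ha : 0 ≤ a) (haR : a < R) :
    ∫⁻ r in Ioo a R, ENNReal.ofReal ((1 + s) * r * (r ^ 2 - a ^ 2) ^ ((s - 1) / 2))
      = ENNReal.ofReal ((R ^ 2 - a ^ 2) ^ ((1 + s) / 2)) := by
  have hcont : ContinuousOn (fun r : ℝ => (r ^ 2 - a ^ 2) ^ ((1 + s) / 2)) (Icc a R) := by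
    refine ContinuousOn.rpow_const (by fun_prop) fun x _ => Or.inr (by linarith)
  have hpos : ∀ r ∈ Ioo a R, 0 < r ^ 2 - a ^ 2 := by
    rintro r ⟨h1, h2⟩
    nlinarith
  have hd : ∀ r ∈ Ioo a R, HasDerivAt (fun r : ℝ => (r ^ 2 - a ^ 2) ^ ((1 + s) / 2))
      ((1 + s) * r * (r ^ 2 - a ^ 2) ^ ((s - 1) / 2)) r := by
    intro r hr
    have := ((hasDerivAt_pow 2 r).sub_const (a ^ 2)).rpow_const (p := (1 + s) / 2)
      (Or.inl (hpos r hr).ne')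
    refine this.congr_deriv ?_
    rw [show (1 + s) / 2 - 1 = (s - 1) / 2 by ring]
    push_cast
    ring
  have hnn : ∀ r ∈ Ioo a R, 0 ≤ (1 + s) * r * (r ^ 2 - a ^ 2) ^ ((s - 1) / 2) := by
    intro r hr
    have := hpos r hr
    have : 0 ≤ r := ha.trans hr.1.le
    positivity
  have hint := intervalIntegral.integrableOn_deriv_of_nonneg hcont hd hnn
  have hI := intervalIntegral.integral_eq_sub_of_hasDerivAt_of_le haR.le hcont hd
    ((intervalIntegrable_iff_integrableOn_Ioc_of_le haR.le).mpr hint)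
  rw [intervalIntegral.integral_of_le haR.le, integral_Ioc_eq_integral_Ioo, sub_self,
    zero_rpow (by linarith), sub_zero] at hI
  rw [← hI, ofReal_integral_eq_lintegral_ofReal (hint.mono_set Ioo_subset_Ioc_self)]
  exact ae_restrict_of_forall_mem measurableSet_Ioo hnn

/-- Layer-cake representation of `segPot`: the density `(R² - u²)^((1+s)/2)` is a superposition of
arcsine-type densities on the intervals `(-r, r)`, `r < R`. -/
theorem segPot_eq {s R : ℝ} (hs0 : 0 < s) (t : ℝ) :
    segPot s R t =
      ENNReal.ofReal (1 + s) * ∫⁻ r in Ioo 0 R, ENNReal.ofReal r * arcPot s (t / r) := by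
  let K : ℝ → ℝ → ℝ≥0∞ := fun u r => if |u| < r then
    ENNReal.ofReal (|t - u| ^ (-s) * ((1 + s) * r * (r ^ 2 - u ^ 2) ^ ((s - 1) / 2))) else 0
  have hK : Measurable (Function.uncurry K) := by
    refine Measurable.ite (measurableSet_lt (by fun_prop) (by fun_prop)) ?_ measurable_const
    fun_prop
  have h1 : segPot s R t = ∫⁻ u in Ioo (-R) R, ∫⁻ r in Ioo 0 R, K u r := by
    unfold segPot
    refine setLIntegral_congr_fun measurableSet_Ioo fun u hu => ?_
    have hu' : |u| < R := abs_lt.mpr hu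
    have : ∀ r, K u r = (Ioi |u|).indicator (fun r => ENNReal.ofReal (|t - u| ^ (-s) *
        ((1 + s) * r * (r ^ 2 - |u| ^ 2) ^ ((s - 1) / 2)))) r := by
      intro r
      simp only [K, Set.indicator, mem_Ioi, sq_abs]
    simp_rw [this]
    rw [lintegral_indicator measurableSet_Ioi, Measure.restrict_restrict measurableSet_Ioi]
    have e : Ioi |u| ∩ Ioo 0 R = Ioo |u| R := by
      ext r
      simp only [mem_inter_iff, mem_Ioi, mem_Ioo]
      constructor
      · rintro ⟨h1, _, h2⟩; exact ⟨h1, h2⟩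
      · rintro ⟨h1, h2⟩; exact ⟨h1, lt_of_le_of_lt (abs_nonneg u) h1, h2⟩
    rw [e]
    simp_rw [ENNReal.ofReal_mul (show 0 ≤ |t - u| ^ (-s) by positivity)]
    rw [lintegral_const_mul' _ _ ENNReal.ofReal_ne_top, lint_layer hs0 (abs_nonneg u) hu', sq_abs]
  have h2 : ∀ r ∈ Ioo 0 R, ∫⁻ u in Ioo (-R) R, K u r =
      ENNReal.ofReal (1 + s) * (ENNReal.ofReal r * arcPot s (t / r)) := by
    rintro r ⟨hr0, hrR⟩
    have : ∀ u, K u r = (Ioo (-r) r).indicator (fun u => ENNReal.ofReal (|t - u| ^ (-s) *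
        ((1 + s) * r * (r ^ 2 - u ^ 2) ^ ((s - 1) / 2)))) u := by
      intro u
      simp only [K, Set.indicator, mem_Ioo, abs_lt]
    simp_rw [this]
    rw [lintegral_indicator measurableSet_Ioo, Measure.restrict_restrict measurableSet_Ioo,
      Set.inter_eq_left.mpr (Ioo_subset_Ioo (by linarith) hrR.le), ← mul_assoc,
      ← ENNReal.ofReal_mul (by linarith)]
    unfold arcPot
    rw [← lintegral_const_mul' _ _ ENNReal.ofReal_ne_top]
    simp_rw [← ENNReal.ofReal_mul (show 0 ≤ (1 + s) * r by positivity)]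
    refine lint_cov measurableSet_Ioo (fun x => r * x) (fun _ => r) (fun u => u / r)
      ?_ ?_ ?_ ?_ ?_ _ _ ?_
    · rintro x ⟨h0, h1⟩; constructor <;> nlinarith
    · rintro x ⟨h0, h1⟩
      constructor
      · rw [lt_div_iff₀ hr0]; linarith
      · rw [div_lt_iff₀ hr0]; linarith
    · intro x _; field_simp
    · intro x _; field_simp
    · intro x _; simpa using (hasDerivAt_id x).const_mul r
    · rintro x ⟨hx0, hx1⟩
      have e1 : t - r * x = r * (t / r - x) := by field_simp
      have e2 : r ^ 2 - (r * x) ^ 2 = r ^ 2 * (1 - x ^ 2) := by ring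
      have e3 : (r ^ 2) ^ ((s - 1) / 2) = r ^ s / r := by
        rw [← rpow_natCast, ← rpow_mul hr0.le, ← rpow_sub_one hr0.ne']; congr 1; push_cast; ring
      rw [e1, e2, abs_mul, abs_of_pos hr0, mul_rpow hr0.le (abs_nonneg _),
        mul_rpow (by positivity) (by nlinarith), e3, rpow_neg hr0.le]
      have := rpow_pos_of_pos hr0 s
      field_simp
  rw [h1, lintegral_lintegral_swap hK.aemeasurable, setLIntegral_congr_fun measurableSet_Ioo h2,
    lintegral_const_mul' _ _ ENNReal.ofReal_ne_top]

/-- At the endpoint the potential of the segment is a single Beta integral. -/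
theorem segPot_self {s R : ℝ} (hs0 : 0 < s) (hs1 : s < 1) (hR : 0 < R) :
    segPot s R R = ENNReal.ofReal ((1 + s) * (R ^ 2 * (1 - s) / 2 * gC s)) := by
  have h := lint_beta_sym (a := (3 - s) / 2) (b := (3 + s) / 2) (by linarith) (by linarith) hR
  rw [BetaR_refl_three hs0 hs1, show (3 - s) / 2 + (3 + s) / 2 - 1 = (2 : ℕ) by push_cast; ring,
    rpow_natCast] at h
  rw [show (1 + s) * (R ^ 2 * (1 - s) / 2 * gC s) = (2 * R) ^ 2 * ((1 - s ^ 2) / 8 * gC s) by ring,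
    ← h]
  refine setLIntegral_congr_fun measurableSet_Ioo fun u hu => ?_
  have h1 : 0 < R - u := by linarith [hu.2]
  have h2 : 0 < R + u := by linarith [hu.1]
  rw [abs_of_pos h1, show R ^ 2 - u ^ 2 = (R - u) * (R + u) by ring, mul_rpow h1.le h2.le,
    ← mul_assoc, ← rpow_add h1]
  congr 3 <;> ring_nf

/-- The layers that do not reach `t` make up the segment `(-t, t)`, so `segPot_self` evaluates them
without knowing `arcPot` outside `[-1, 1]`. -/
theorem half_self {s t : ℝ} (hs0 : 0 < s) (hs1 : s < 1) (ht : 0 < t) :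
    ∫⁻ r in Ioo 0 t, ENNReal.ofReal r * arcPot s (t / r)
      = ENNReal.ofReal (t ^ 2 * (1 - s) / 2 * gC s) := by
  have h := segPot_self hs0 hs1 ht
  rw [segPot_eq hs0, ENNReal.ofReal_mul (by linarith)] at h
  exact (ENNReal.mul_right_inj (ENNReal.ofReal_pos.mpr (by linarith)).ne'
    ENNReal.ofReal_ne_top).mp h

theorem lint_id {a b c : ℝ} (ha : 0 ≤ a) (hab : a ≤ b) :
    ∫⁻ r in Ioo a b, ENNReal.ofReal r * ENNReal.ofReal c =
      ENNReal.ofReal ((b ^ 2 - a ^ 2) / 2 * c) := by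
  have hI : ∫ r in Ioo a b, r = (b ^ 2 - a ^ 2) / 2 := by
    rw [← integral_Ioc_eq_integral_Ioo, ← intervalIntegral.integral_of_le hab, integral_id]
  have hint : IntegrableOn (fun r : ℝ => r) (Ioo a b) :=
    (continuous_id.integrableOn_Icc (a := a) (b := b)).mono_set Ioo_subset_Icc_self
  rw [lintegral_mul_const' _ _ ENNReal.ofReal_ne_top, ENNReal.ofReal_mul (by nlinarith), ← hI,
    ofReal_integral_eq_lintegral_ofReal hint]
  exact ae_restrict_of_forall_mem measurableSet_Ioo fun r hr => ha.trans hr.1.le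

theorem lint_split {a b : ℝ} (ha : 0 ≤ a) (hab : a ≤ b) (F : ℝ → ℝ≥0∞) :
    ∫⁻ r in Ioo 0 b, F r = (∫⁻ r in Ioo 0 a, F r) + ∫⁻ r in Ioo a b, F r := by
  rcases hab.eq_or_lt with rfl | hab
  · simp
  have hU : Ioo 0 b = Ioo 0 a ∪ Ico a b ∨ a = 0 := by
    rcases ha.eq_or_lt with h | h
    · exact Or.inr h.symm
    · exact Or.inl (Ioo_union_Ico_eq_Ioo h hab.le).symm
  rcases hU with hU | rfl
  · have hdis : Disjoint (Ioo 0 a) (Ico a b) := by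
      rw [Set.disjoint_left]
      rintro x ⟨_, h⟩ ⟨h', _⟩
      linarith
    rw [hU, lintegral_union measurableSet_Ico hdis, setLIntegral_congr Ioo_ae_eq_Ico.symm]
  · simp

theorem segPot_abs {s R : ℝ} (hs0 : 0 < s) (t : ℝ) : segPot s R |t| = segPot s R t := by
  rcases abs_choice t with h | h
  · rw [h]
  · rw [h, segPot_eq hs0, segPot_eq hs0]
    simp_rw [neg_div, arcPot_neg]

/-- Inside the segment only the layers `r > |t|` give a constant potential; the layers `r < |t|` are
evaluated by scaling from the endpoint value `segPot_self`. -/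
theorem segPot_in {s R t : ℝ} (hs0 : 0 < s) (hs1 : s < 1) (hR : 0 < R) (ht : |t| ≤ R) :
    segPot s R t = ENNReal.ofReal ((1 + s) * gC s / 2 * (R ^ 2 - s * t ^ 2)) := by
  have hg := gC_pos hs0 hs1
  rw [← segPot_abs hs0, ← sq_abs t]
  set a := |t| with ha
  have ha0 : 0 ≤ a := abs_nonneg t
  have h1 : ∫⁻ r in Ioo a R, ENNReal.ofReal r * arcPot s (a / r) =
      ENNReal.ofReal ((R ^ 2 - a ^ 2) / 2 * gC s) := by
    rw [← lint_id ha0 ht]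
    refine setLIntegral_congr_fun measurableSet_Ioo fun r hr => ?_
    have hr0 : 0 < r := lt_of_le_of_lt ha0 hr.1
    rw [arcPot_in hs0 hs1]
    rw [abs_of_nonneg (by positivity), div_lt_one hr0]
    exact hr.1
  have h2 : ∫⁻ r in Ioo 0 a, ENNReal.ofReal r * arcPot s (a / r)
      = ENNReal.ofReal (a ^ 2 * (1 - s) / 2 * gC s) := by
    rcases ha0.eq_or_lt with h | h
    · simp [← h]
    · exact half_self hs0 hs1 h
  have h3 : 0 ≤ R ^ 2 - a ^ 2 := by nlinarith
  have h4 : 0 ≤ 1 - s := by linarith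
  rw [segPot_eq hs0, lint_split ha0 ht, h1, h2, ← ENNReal.ofReal_add (by positivity) (by positivity),
    ← ENNReal.ofReal_mul (by linarith)]
  congr 1
  ring

theorem segPot_le {s R : ℝ} (hs0 : 0 < s) (hs1 : s < 1) (hR : 0 < R) (t : ℝ) :
    segPot s R t ≤ ENNReal.ofReal ((1 + s) * gC s / 2 * R ^ 2) := by
  have hg := gC_pos hs0 hs1
  rw [segPot_eq hs0, show (1 + s) * gC s / 2 * R ^ 2 = (1 + s) * ((R ^ 2 - 0 ^ 2) / 2 * gC s) by ring,
    ENNReal.ofReal_mul (by linarith), ← lint_id le_rfl hR.le]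
  gcongr
  exact arcPot_le hs0 hs1 _

theorem segPot_ge {s R : ℝ} (hs0 : 0 < s) (hs1 : s < 1) (hR : 0 < R) (t : ℝ) :
    ENNReal.ofReal ((1 + s) * gC s / 2 * R ^ 2) ≤
      segPot s R t + ENNReal.ofReal ((1 + s) * gC s / 2 * s * t ^ 2) := by
  have hg := gC_pos hs0 hs1
  rcases le_or_gt |t| R with h | h
  · have h3 : 0 ≤ R ^ 2 - s * t ^ 2 := by
      have : t ^ 2 ≤ R ^ 2 := by rw [← sq_abs t]; nlinarith [abs_nonneg t]
      nlinarith [sq_nonneg t]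
    rw [segPot_in hs0 hs1 hR h, ← ENNReal.ofReal_add (by positivity) (by positivity)]
    apply ENNReal.ofReal_le_ofReal
    linarith
  · rw [← segPot_abs hs0, ← sq_abs t]
    set a := |t| with ha
    have ha0 : 0 < a := hR.trans h
    have h2 := half_self hs0 hs1 ha0
    have h5 : 0 ≤ a ^ 2 - R ^ 2 := by nlinarith
    have h4 : 0 ≤ 1 - s := by linarith
    have h3 : ∫⁻ r in Ioo R a, ENNReal.ofReal r * arcPot s (a / r) ≤
        ENNReal.ofReal ((a ^ 2 - R ^ 2) / 2 * gC s) := by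
      rw [← lint_id hR.le h.le]
      gcongr
      exact arcPot_le hs0 hs1 _
    rw [lint_split hR.le h.le] at h2
    have h6 : ENNReal.ofReal (a ^ 2 * (1 - s) / 2 * gC s) ≤
        (∫⁻ r in Ioo 0 R, ENNReal.ofReal r * arcPot s (a / r)) +
          ENNReal.ofReal ((a ^ 2 - R ^ 2) / 2 * gC s) := by
      rw [← h2]; gcongr
    have h7 : ENNReal.ofReal (R ^ 2 / 2 * gC s) + ENNReal.ofReal ((a ^ 2 - R ^ 2) / 2 * gC s) ≤
        ((∫⁻ r in Ioo 0 R, ENNReal.ofReal r * arcPot s (a / r)) +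
          ENNReal.ofReal (s * a ^ 2 / 2 * gC s)) + ENNReal.ofReal ((a ^ 2 - R ^ 2) / 2 * gC s) := by
      calc _ = ENNReal.ofReal (a ^ 2 * (1 - s) / 2 * gC s) +
            ENNReal.ofReal (s * a ^ 2 / 2 * gC s) := by
            rw [← ENNReal.ofReal_add (by positivity) (by positivity),
              ← ENNReal.ofReal_add (by positivity) (by positivity)]
            congr 1; ring
        _ ≤ _ := by
            rw [add_right_comm]
            gcongr
    have h8 := (ENNReal.add_le_add_iff_right ENNReal.ofReal_ne_top).mp h7
    calc ENNReal.ofReal ((1 + s) * gC s / 2 * R ^ 2)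
        = ENNReal.ofReal (1 + s) * ENNReal.ofReal (R ^ 2 / 2 * gC s) := by
          rw [← ENNReal.ofReal_mul (by linarith)]; congr 1; ring
      _ ≤ _ := mul_le_mul_right h8 _
      _ = _ := by
          rw [mul_add, segPot_eq hs0, ← ENNReal.ofReal_mul (by linarith)]
          congr 2; ring

/-! ### Angular integrals of powers of `|sin|` -/

/-- The value of `∫_{-π}^{π} |sin ψ|^p dψ`. -/
def sinC (p : ℝ) : ℝ := 2 * BetaR (1 / 2) ((p + 1) / 2)

theorem sinC_pos {p : ℝ} (hp : -1 < p) : 0 < sinC p := by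
  have := BetaR_pos (a := 1 / 2) (b := (p + 1) / 2) (by norm_num) (by linarith)
  unfold sinC
  positivity

theorem sinC_add_two {p : ℝ} (hp : -1 < p) : sinC (p + 2) = (p + 1) / (p + 2) * sinC p := by
  unfold sinC
  rw [show (p + 2 + 1) / 2 = (p + 1) / 2 + 1 by ring, BetaR_half_succ (by linarith),
    show (p + 1) / 2 / ((p + 1) / 2 + 1 / 2) = (p + 1) / (p + 2) by
      rw [show (p + 1) / 2 + 1 / 2 = (p + 2) / 2 by ring, div_div_div_cancel_right₀ two_ne_zero]]
  ring

theorem lint_sin {p : ℝ} (hp : -1 < p) :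
    ∫⁻ x in Ioo (-π) π, ENNReal.ofReal (|Real.sin x| ^ p) = ENNReal.ofReal (sinC p) := by
  have hq : 0 < (p + 1) / 2 := by linarith
  have h := lint_beta_sym (a := (p + 1) / 2) (b := (p + 1) / 2) hq hq one_pos
  rw [show (p + 1) / 2 + (p + 1) / 2 - 1 = 2 * ((p + 1) / 2) - 1 by ring, mul_one,
    BetaR_dup hq] at h
  rw [lint_fold pi_pos _ (by fun_prop) (fun _ _ => by positivity), sinC,
    ENNReal.ofReal_mul (by norm_num), ← h, ← lintegral_const_mul' _ _ ENNReal.ofReal_ne_top]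
  simp_rw [← ENNReal.ofReal_mul (show (0 : ℝ) ≤ 2 by norm_num)]
  symm
  refine lint_cov measurableSet_Ioo Real.cos (fun x => - Real.sin x) Real.arccos ?_ ?_ ?_ ?_ ?_ _ _ ?_
  · rintro x ⟨h0, h1⟩
    constructor
    · rw [← Real.cos_pi]
      exact Real.cos_lt_cos_of_nonneg_of_le_pi h0.le le_rfl h1
    · rw [← Real.cos_zero]
      exact Real.cos_lt_cos_of_nonneg_of_le_pi le_rfl h1.le h0
  · rintro y ⟨h0, h1⟩
    exact ⟨Real.arccos_pos.mpr h1, lt_of_le_of_ne (Real.arccos_le_pi y) fun h => by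
      have := Real.arccos_eq_pi.mp h
      linarith⟩
  · rintro y ⟨h0, h1⟩
    exact Real.cos_arccos h0.le h1.le
  · rintro x ⟨h0, h1⟩
    exact Real.arccos_cos h0.le h1.le
  · intro x _
    exact Real.hasDerivAt_cos x
  · rintro x ⟨h0, h1⟩
    have hs := Real.sin_pos_of_pos_of_lt_pi h0 h1
    have h2 : 0 ≤ 1 - Real.cos x := by linarith [Real.cos_le_one x]
    have h3 : 0 ≤ 1 + Real.cos x := by linarith [Real.neg_one_le_cos x]
    rw [← mul_rpow h2 h3, show (1 - Real.cos x) * (1 + Real.cos x) = Real.sin x ^ 2 by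
      rw [Real.sin_sq]; ring, Real.sin_neg, abs_neg, abs_of_pos hs, ← rpow_natCast,
      ← rpow_mul hs.le, show ((2 : ℕ) : ℝ) * ((p + 1) / 2 - 1) = p - 1 by push_cast; ring,
      rpow_sub_one hs.ne']
    field_simp
    ring

theorem sin_integrable {p : ℝ} (hp : -1 < p) :
    IntervalIntegrable (fun x => |Real.sin x| ^ p) volume (-π) π := by
  rw [intervalIntegrable_iff_integrableOn_Ioo_of_le (by linarith [pi_pos])]
  refine ⟨(by fun_prop : Measurable fun x => |Real.sin x| ^ p).aestronglyMeasurable, ?_⟩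
  rw [hasFiniteIntegral_iff_ofReal (ae_of_all _ fun x => by positivity), lint_sin hp]
  exact ENNReal.ofReal_lt_top

theorem sin_integral {p : ℝ} (hp : -1 < p) : ∫ x in (-π)..π, |Real.sin x| ^ p = sinC p := by
  rw [intervalIntegral.integral_of_le (by linarith [pi_pos]), integral_Ioc_eq_integral_Ioo,
    integral_eq_lintegral_of_nonneg_ae (ae_of_all _ fun x => by positivity)
      (by fun_prop : Measurable fun x => |Real.sin x| ^ p).aestronglyMeasurable,
    lint_sin hp, ENNReal.toReal_ofReal (sinC_pos hp).le]

/-- Odd contributions to the angular integrals vanish. -/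
theorem odd_part {p C : ℝ} (hp : -1 < p) (m : ℝ → ℝ) (hm : Measurable m) (hb : ∀ x, |m x| ≤ C)
    (ho : ∀ x, m (-x) = - m x) :
    IntervalIntegrable (fun x => |Real.sin x| ^ p * m x) volume (-π) π ∧
      ∫ x in (-π)..π, |Real.sin x| ^ p * m x = 0 := by
  constructor
  · refine ((sin_integrable hp).mul_const C).mono_fun
      (by fun_prop : Measurable fun x => |Real.sin x| ^ p * m x).aestronglyMeasurable
      (ae_of_all _ fun x => ?_)
    have h1 : 0 ≤ |Real.sin x| ^ p := by positivity
    beta_reduce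
    rw [norm_mul, norm_mul]
    gcongr
    exact (hb x).trans (le_abs_self C)
  · have h := intervalIntegral.integral_comp_neg (a := -π) (b := π)
      (fun x => |Real.sin x| ^ p * m x)
    rw [neg_neg] at h
    simp_rw [ho, Real.sin_neg, abs_neg, mul_neg] at h
    rw [intervalIntegral.integral_neg] at h
    linarith

/-- The value of an angular integral with an even part `e₀ + e₂ sin² + e₄ sin⁴` and an odd part. -/
theorem sin_poly {p : ℝ} (hp : -1 < p) (e0 e2 e4 o1 o2 : ℝ) :
    IntervalIntegrable (fun x => |Real.sin x| ^ p * (e0 + e2 * Real.sin x ^ 2 + e4 * Real.sin x ^ 4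
      + Real.sin x * Real.cos x * (o1 + o2 * Real.sin x ^ 2))) volume (-π) π ∧
    ∫ x in (-π)..π, |Real.sin x| ^ p * (e0 + e2 * Real.sin x ^ 2 + e4 * Real.sin x ^ 4
      + Real.sin x * Real.cos x * (o1 + o2 * Real.sin x ^ 2)) =
      sinC p * (e0 + e2 * ((p + 1) / (p + 2)) +
        e4 * ((p + 1) * (p + 3) / ((p + 2) * (p + 4)))) := by
  have ho := odd_part (C := |o1| + |o2|) hp
    (fun x => Real.sin x * Real.cos x * (o1 + o2 * Real.sin x ^ 2)) (by fun_prop)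
    (fun x => by
      have h1 : |Real.sin x| ≤ 1 := Real.abs_sin_le_one x
      have h2 : |Real.cos x| ≤ 1 := Real.abs_cos_le_one x
      have h3 : |o1 + o2 * Real.sin x ^ 2| ≤ |o1| + |o2| := by
        refine (abs_add_le _ _).trans ?_
        rw [abs_mul, abs_pow]
        have : |Real.sin x| ^ 2 ≤ 1 := pow_le_one₀ (abs_nonneg _) h1
        nlinarith [abs_nonneg o2]
      rw [abs_mul, abs_mul]
      have h4 : |Real.sin x| * |Real.cos x| ≤ 1 := mul_le_one₀ h1 (abs_nonneg _) h2
      nlinarith [abs_nonneg (o1 + o2 * Real.sin x ^ 2)])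
    (fun x => by simp only [Real.sin_neg, Real.cos_neg]; ring)
  have i0 := (sin_integrable hp).mul_const e0
  have i2 := (sin_integrable (show -1 < p + 2 by linarith)).mul_const e2
  have i4 := (sin_integrable (show -1 < p + 2 + 2 by linarith)).mul_const e4
  have hs : ∀ q x : ℝ, -1 < q → |Real.sin x| ^ (q + 2) = |Real.sin x| ^ q * Real.sin x ^ 2 := by
    intro q x hq
    rcases eq_or_ne (Real.sin x) 0 with h | h
    · rw [h, abs_zero, zero_rpow (by linarith)]
      simp
    · rw [rpow_add (abs_pos.mpr h), rpow_two, sq_abs]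
  have key : (fun x => |Real.sin x| ^ p * (e0 + e2 * Real.sin x ^ 2 + e4 * Real.sin x ^ 4
      + Real.sin x * Real.cos x * (o1 + o2 * Real.sin x ^ 2))) = fun x =>
      |Real.sin x| ^ p * e0 + |Real.sin x| ^ (p + 2) * e2 + |Real.sin x| ^ (p + 2 + 2) * e4 +
        |Real.sin x| ^ p * (Real.sin x * Real.cos x * (o1 + o2 * Real.sin x ^ 2)) := by
    funext x
    rw [hs (p + 2) x (by linarith), hs p x hp]
    ring
  rw [key]
  refine ⟨((i0.add i2).add i4).add ho.1, ?_⟩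
  rw [intervalIntegral.integral_add ((i0.add i2).add i4) ho.1,
    intervalIntegral.integral_add (i0.add i2) i4, intervalIntegral.integral_add i0 i2, ho.2,
    intervalIntegral.integral_mul_const, intervalIntegral.integral_mul_const,
    intervalIntegral.integral_mul_const, sin_integral hp, sin_integral (by linarith),
    sin_integral (by linarith), sinC_add_two (p := p + 2) (by linarith), sinC_add_two hp]
  have h2 : p + 2 ≠ 0 := by linarith
  have h4 : p + 4 ≠ 0 := by linarith
  have h4' : p + 2 + 2 ≠ 0 := by linarith
  field_simp
  ring

/-- An angular integral over one period may be shifted. -/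
theorem shift_angle (f : ℝ → ℝ) (hf : ∀ x, f (x + 2 * π) = f x) (c : ℝ) :
    ∫ x in (-π)..π, f x = ∫ x in (-π)..π, f (x + c) := by
  have hp : Function.Periodic f (2 * π) := hf
  rw [intervalIntegral.integral_comp_add_right]
  have := hp.intervalIntegral_add_eq (-π) (-π + c)
  rw [show -π + 2 * π = π by ring, show -π + c + 2 * π = π + c by ring] at this
  exact this

theorem shift_angle_integrable (f : ℝ → ℝ) (hf : ∀ x, f (x + 2 * π) = f x) (c : ℝ)
    (h : IntervalIntegrable (fun x => f (x + c)) volume (-π) π) :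
    IntervalIntegrable f volume (-π) π := by
  have hp : Function.Periodic f (2 * π) := hf
  have h2 := h.comp_sub_right c
  simp only [sub_add_cancel] at h2
  refine hp.intervalIntegrable (by positivity) (t := -π + c) ?_ _ _
  rw [show -π + c + 2 * π = π + c by ring]
  exact h2

/-! ### The angle function and its transform -/

/-- The angle function `Ω*`, a quartic form in `(sin θ, cos θ)`. Its coefficients are those of
the average of `|cos(φ - θ)|^{-s}` over `φ` with weight `sin⁴ φ`, see `superpos_angle`, normalized
by `Ω*(π/2) = 1`. -/
def OmS (s θ : ℝ) : ℝ :=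
  Real.sin θ ^ 4 + 6 / (3 - s) * Real.sin θ ^ 2 * Real.cos θ ^ 2
    + 3 / ((1 - s) * (3 - s)) * Real.cos θ ^ 4

theorem OmS_one_le {s : ℝ} (hs0 : 0 < s) (hs1 : s < 1) (θ : ℝ) : 1 ≤ OmS s θ := by
  have hm : 2 ≤ 6 / (3 - s) := by
    rw [le_div_iff₀ (by linarith)]
    linarith
  have hn : 1 ≤ 3 / ((1 - s) * (3 - s)) := by
    rw [le_div_iff₀ (mul_pos (by linarith) (by linarith))]
    nlinarith
  have h := Real.sin_sq_add_cos_sq θ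
  have h1 : (1 : ℝ) = Real.sin θ ^ 4 + 2 * Real.sin θ ^ 2 * Real.cos θ ^ 2
    + 1 * Real.cos θ ^ 4 := by linear_combination (-Real.sin θ ^ 2 - Real.cos θ ^ 2 - 1) * h
  conv_lhs => rw [h1]
  unfold OmS
  gcongr

theorem OmS_le {s : ℝ} (hs0 : 0 < s) (hs1 : s < 1) (θ : ℝ) :
    OmS s θ ≤ 1 + 6 / (3 - s) + 3 / ((1 - s) * (3 - s)) := by
  have h := Real.sin_sq_add_cos_sq θ
  have hS : Real.sin θ ^ 2 ≤ 1 := by nlinarith [sq_nonneg (Real.cos θ)]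
  have hC : Real.cos θ ^ 2 ≤ 1 := by nlinarith [sq_nonneg (Real.sin θ)]
  have hS4 : Real.sin θ ^ 4 ≤ 1 := by nlinarith [sq_nonneg (Real.sin θ)]
  have hC4 : Real.cos θ ^ 4 ≤ 1 := by nlinarith [sq_nonneg (Real.cos θ)]
  have hSC : Real.sin θ ^ 2 * Real.cos θ ^ 2 ≤ 1 := mul_le_one₀ hS (by positivity) hC
  have hm : 0 ≤ 6 / (3 - s) := div_nonneg (by norm_num) (by linarith)
  have hn : 0 ≤ 3 / ((1 - s) * (3 - s)) :=
    div_nonneg (by norm_num) (mul_pos (by linarith) (by linarith)).le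
  unfold OmS
  nlinarith [mul_le_mul_of_nonneg_left hSC hm, mul_le_mul_of_nonneg_left hC4 hn]

theorem OmS_satisfiesH {s : ℝ} (hs0 : 0 < s) (hs1 : s < 1) : SatisfiesH (OmS s) := by
  refine ⟨?_, ?_, fun θ => by linarith [OmS_one_le hs0 hs1 θ], ?_⟩
  · unfold OmS
    fun_prop
  · intro θ
    simp only [OmS, Real.sin_add_two_pi, Real.cos_add_two_pi]
  · intro θ
    simp only [OmS, Real.sin_add_pi, Real.cos_add_pi]
    ring

theorem OmS_half_pi (s : ℝ) : OmS s (π / 2) = 1 := by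
  simp [OmS]

/-- A rotated even quartic form in `(S, C)` is an even polynomial in `S` plus a part that is odd
under `S ↦ -S`, given `S² + C² = 1`. -/
theorem quartic_rot (A B S C m n : ℝ) (h : S ^ 2 + C ^ 2 = 1) :
    (A * C + B * S) ^ 4 + m * (A * C + B * S) ^ 2 * (B * C - A * S) ^ 2 + n * (B * C - A * S) ^ 4 =
      (A ^ 4 + m * A ^ 2 * B ^ 2 + n * B ^ 4) +
      ((6 * A ^ 2 * B ^ 2 * (1 + n) + m * (A ^ 4 + B ^ 4 - 4 * A ^ 2 * B ^ 2))
        - 2 * (A ^ 4 + m * A ^ 2 * B ^ 2 + n * B ^ 4)) * S ^ 2 +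
      ((A ^ 4 + m * A ^ 2 * B ^ 2 + n * B ^ 4)
        - (6 * A ^ 2 * B ^ 2 * (1 + n) + m * (A ^ 4 + B ^ 4 - 4 * A ^ 2 * B ^ 2))
        + (B ^ 4 + m * A ^ 2 * B ^ 2 + n * A ^ 4)) * S ^ 4 +
      S * C * ((4 * A ^ 3 * B + 2 * m * A * B * (B ^ 2 - A ^ 2) - 4 * n * A * B ^ 3) +
        ((4 * A * B ^ 3 - 2 * m * A * B * (B ^ 2 - A ^ 2) - 4 * n * A ^ 3 * B)
          - (4 * A ^ 3 * B + 2 * m * A * B * (B ^ 2 - A ^ 2) - 4 * n * A * B ^ 3)) * S ^ 2) := by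
  linear_combination ((A ^ 4 + m * A ^ 2 * B ^ 2 + n * B ^ 4) * (C ^ 2 + 1 - S ^ 2)
    + (4 * A ^ 3 * B + 2 * m * A * B * (B ^ 2 - A ^ 2) - 4 * n * A * B ^ 3) * C * S
    + (6 * A ^ 2 * B ^ 2 * (1 + n) + m * (A ^ 4 + B ^ 4 - 4 * A ^ 2 * B ^ 2)) * S ^ 2) * h

/-- The two normalizing constants of `Ω̃` are related through the reflection and duplication
formulas for the Gamma function. -/
theorem tauC_mul_sinC {s : ℝ} (hs0 : 0 < s) (hs1 : s < 1) :
    tauC (2 - s) * sinC s = -(cC s * ((1 - s) / s)) := by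
  have hc := cos_pos_of hs0 hs1
  have h1 : Real.cos ((2 - s) * π / 2) = -Real.cos (s * π / 2) := by
    rw [show (2 - s) * π / 2 = π - s * π / 2 by ring, Real.cos_pi_sub]
  have h2 := Real.Gamma_mul_Gamma_add_half ((2 - s) / 2)
  rw [show (2 - s) / 2 + 1 / 2 = (1 - s) / 2 + 1 by ring,
    Real.Gamma_add_one (by linarith), show 2 * ((2 - s) / 2) = 2 - s by ring] at h2
  have h3 : Real.Gamma (1 / 2 + (s + 1) / 2) = s / 2 * Real.Gamma (s / 2) := by
    rw [show 1 / 2 + (s + 1) / 2 = s / 2 + 1 by ring, Real.Gamma_add_one (by linarith)]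
  have h4 := Gamma_refl s
  rw [gC, eq_div_iff hc.ne'] at h4
  have hG : 0 < Real.Gamma (s / 2) := Real.Gamma_pos_of_pos (by linarith)
  have hp : √π ≠ 0 := (Real.sqrt_pos.mpr pi_pos).ne'
  have e1 : (2 * π) ^ (-(2 - s)) = 2 ^ (-(2 - s)) * π ^ (-(2 - s)) :=
    mul_rpow (by norm_num) pi_pos.le
  have e2 : (2 : ℝ) ^ (1 - (2 - s)) = 2 * 2 ^ (-(2 - s)) := by
    rw [sub_eq_add_neg, rpow_add two_pos, rpow_one]
  have e3 : π ^ (s - 1) = π * π ^ (-(2 - s)) := by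
    rw [show s - 1 = 1 + (-(2 - s)) by ring, rpow_add pi_pos, rpow_one]
  unfold tauC sinC cC BetaR
  rw [h1, h3, e1, e3, Real.Gamma_one_half_eq]
  rw [e2] at h2
  rw [show (s + 1) / 2 = (1 + s) / 2 by ring]
  generalize Real.Gamma (s / 2) = Z at *
  generalize Real.Gamma ((2 - s) / 2) = X at *
  generalize Real.Gamma (2 - s) = Y at *
  generalize Real.Gamma ((1 - s) / 2) = G1 at *
  generalize Real.Gamma ((1 + s) / 2) = G2 at *
  generalize Real.cos (s * π / 2) = c at *
  generalize (2 : ℝ) ^ (-(2 - s)) = P at *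
  generalize π ^ (-(2 - s)) = P' at *
  calc _ = -(P' * c * 2 * G2 / (s * Z)) * (Y * (2 * P) * √π) := by
        field_simp
    _ = -(P' / (s * Z) * X * (1 - s)) * (G1 * G2 * c) := by
        rw [← h2]
        field_simp
    _ = _ := by
        rw [h4]
        field_simp

/-- The transformed angle function of `Ω*` is a positive multiple of `sin⁴ φ`. -/
theorem OmS_Omt {s : ℝ} (hs0 : 0 < s) (hs1 : s < 1) (φ : ℝ) : 0 ≤ Omt s (OmS s) φ := by
  obtain ⟨A, hA⟩ : ∃ A, Real.sin (φ + π / 2) = A := ⟨_, rfl⟩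
  obtain ⟨B, hB⟩ : ∃ B, Real.cos (φ + π / 2) = B := ⟨_, rfl⟩
  set m := 6 / (3 - s) with hm
  set n := 3 / ((1 - s) * (3 - s)) with hn
  set q0 := A ^ 4 + m * A ^ 2 * B ^ 2 + n * B ^ 4 with hq0
  set q2 := 6 * A ^ 2 * B ^ 2 * (1 + n) + m * (A ^ 4 + B ^ 4 - 4 * A ^ 2 * B ^ 2) with hq2
  set q4 := B ^ 4 + m * A ^ 2 * B ^ 2 + n * A ^ 4 with hq4
  set o1 := 4 * A ^ 3 * B + 2 * m * A * B * (B ^ 2 - A ^ 2) - 4 * n * A * B ^ 3 with ho1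
  set o3 := 4 * A * B ^ 3 - 2 * m * A * B * (B ^ 2 - A ^ 2) - 4 * n * A ^ 3 * B with ho3
  have hΩ : OmS s (φ + π / 2) = q0 := by
    rw [OmS, hA, hB, hq0]
  have hper : ∀ θ, |Real.cos (φ - (θ + 2 * π))| ^ (-2 + s) * (OmS s (θ + 2 * π) - OmS s (φ + π / 2))
      = |Real.cos (φ - θ)| ^ (-2 + s) * (OmS s θ - OmS s (φ + π / 2)) := by
    intro θ
    rw [(OmS_satisfiesH hs0 hs1).2.1, show φ - (θ + 2 * π) = φ - θ - 2 * π by ring,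
      Real.cos_sub_two_pi]
  have ev := sin_poly (p := s) (by linarith) (q2 - 2 * q0) (q0 - q2 + q4) 0 0 0
  -- `sin / |sin|` is factored out because `|sin|^{s-2}` alone is not integrable
  have od := odd_part (p := s - 1) (C := |o1| + |o3 - o1|) (by linarith)
    (fun x => Real.sin x / |Real.sin x| * (Real.cos x * (o1 + (o3 - o1) * Real.sin x ^ 2)))
    (by fun_prop)
    (fun x => by
      have h1 : |Real.sin x| ≤ 1 := Real.abs_sin_le_one x
      have h2 : |Real.cos x| ≤ 1 := Real.abs_cos_le_one x
      have h3 : |o1 + (o3 - o1) * Real.sin x ^ 2| ≤ |o1| + |o3 - o1| := by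
        refine (abs_add_le _ _).trans ?_
        rw [abs_mul, abs_pow]
        have : |Real.sin x| ^ 2 ≤ 1 := pow_le_one₀ (abs_nonneg _) h1
        nlinarith [abs_nonneg (o3 - o1)]
      rw [abs_mul, abs_mul, abs_div, abs_abs]
      have h4 : |Real.sin x| / |Real.sin x| ≤ 1 := div_self_le_one _
      have h5 : 0 ≤ |Real.sin x| / |Real.sin x| := by positivity
      have h6 : |Real.cos x| * |o1 + (o3 - o1) * Real.sin x ^ 2| ≤ |o1| + |o3 - o1| := by
        nlinarith [abs_nonneg (o1 + (o3 - o1) * Real.sin x ^ 2)]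
      have h7 : 0 ≤ |Real.cos x| * |o1 + (o3 - o1) * Real.sin x ^ 2| := by positivity
      nlinarith)
    (fun x => by simp only [Real.sin_neg, Real.cos_neg, abs_neg]; ring)
  have hint : ∫ θ in (-π)..π, |Real.cos (φ - θ)| ^ (-2 + s) * (OmS s θ - OmS s (φ + π / 2)) =
      sinC s * ((q2 - 2 * q0) + (q0 - q2 + q4) * ((s + 1) / (s + 2))) := by
    rw [shift_angle _ hper (φ + π / 2)]
    have e := intervalIntegral.integral_add ev.1 od.1
    rw [ev.2, od.2] at e
    rw [show sinC s * ((q2 - 2 * q0) + (q0 - q2 + q4) * ((s + 1) / (s + 2))) =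
      sinC s * (q2 - 2 * q0 + (q0 - q2 + q4) * ((s + 1) / (s + 2)) +
        0 * ((s + 1) * (s + 3) / ((s + 2) * (s + 4)))) + 0 by ring, ← e]
    refine intervalIntegral.integral_congr fun x _ => ?_
    have h1 : |Real.cos (φ - (x + (φ + π / 2)))| = |Real.sin x| := by
      rw [show φ - (x + (φ + π / 2)) = -(x + π / 2) by ring, Real.cos_neg, Real.cos_add_pi_div_two,
        abs_neg]
    have h2 : OmS s (x + (φ + π / 2)) = q0 + (q2 - 2 * q0) * Real.sin x ^ 2
        + (q0 - q2 + q4) * Real.sin x ^ 4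
        + Real.sin x * Real.cos x * (o1 + (o3 - o1) * Real.sin x ^ 2) := by
      rw [← quartic_rot A B (Real.sin x) (Real.cos x) m n (Real.sin_sq_add_cos_sq x), OmS,
        Real.sin_add x, Real.cos_add x, hA, hB]
      ring
    rw [h1, h2, hΩ]
    rcases eq_or_ne (Real.sin x) 0 with h | h
    · simp [h, zero_rpow hs0.ne']
    · have hp := abs_pos.mpr h
      have e1 : |Real.sin x| ^ s = |Real.sin x| ^ (-2 + s) * Real.sin x ^ 2 := by
        rw [← sq_abs (Real.sin x), ← rpow_two, ← rpow_add hp]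
        congr 1; ring
      have e2 : |Real.sin x| ^ (s - 1) = |Real.sin x| ^ (-2 + s) * |Real.sin x| := by
        nth_rw 3 [← rpow_one (|Real.sin x|)]
        rw [← rpow_add hp]
        congr 1; ring
      rw [e1, e2]
      field_simp
      ring
  rw [Omt, hint, hΩ, ← mul_assoc, tauC_mul_sinC hs0 hs1]
  have hc : 0 < cC s := by
    unfold cC
    have := Real.Gamma_pos_of_pos (show 0 < s / 2 by linarith)
    have := Real.Gamma_pos_of_pos (show 0 < (2 - s) / 2 by linarith)
    positivity
  have h1 : 0 < 1 - s := by linarith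
  have h2 : 0 < 2 - s := by linarith
  have h3 : 0 < 3 - s := by linarith
  have h4 : 0 < 4 - s := by linarith
  -- the coefficients of `A⁴` and `A² B²` cancel for this choice of `m` and `n`
  have : -(cC s * ((1 - s) / s)) * (q2 - 2 * q0 + (q0 - q2 + q4) * ((s + 1) / (s + 2)))
      + cC s * q0 = cC s / s * (s * (2 - s) * (4 - s) / ((3 - s) * (1 - s))) * B ^ 4 := by
    rw [hq0, hq2, hq4, hm, hn]
    field_simp
    ring
  rw [this]
  positivity

/-- On the unit circle, `Ω*` is a superposition of the one-dimensional kernels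
`|⟨e_θ, e_φ⟩|^{-s}` with weight `sin⁴ φ`. -/
theorem superpos_angle {s : ℝ} (hs0 : 0 < s) (hs1 : s < 1) (θ : ℝ) :
    IntervalIntegrable (fun φ => |Real.cos (φ - θ)| ^ (-s) * Real.sin φ ^ 4) volume (-π) π ∧
    ∫ φ in (-π)..π, |Real.cos (φ - θ)| ^ (-s) * Real.sin φ ^ 4 = sinC (4 - s) * OmS s θ := by
  obtain ⟨a, ha⟩ : ∃ a, Real.cos θ = a := ⟨_, rfl⟩
  obtain ⟨b, hb⟩ : ∃ b, Real.sin θ = b := ⟨_, rfl⟩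
  have hper : ∀ φ, |Real.cos (φ + 2 * π - θ)| ^ (-s) * Real.sin (φ + 2 * π) ^ 4
      = |Real.cos (φ - θ)| ^ (-s) * Real.sin φ ^ 4 := by
    intro φ
    rw [Real.sin_add_two_pi, show φ + 2 * π - θ = φ - θ + 2 * π by ring, Real.cos_add_two_pi]
  have ev := sin_poly (p := -s) (by linarith) (a ^ 4) (6 * a ^ 2 * b ^ 2 - 2 * a ^ 4)
    (a ^ 4 - 6 * a ^ 2 * b ^ 2 + b ^ 4) (-4 * a ^ 3 * b) (-4 * a * b ^ 3 + 4 * a ^ 3 * b)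
  have key : (fun x => |Real.sin x| ^ (-s) * (a ^ 4 + (6 * a ^ 2 * b ^ 2 - 2 * a ^ 4) *
      Real.sin x ^ 2 + (a ^ 4 - 6 * a ^ 2 * b ^ 2 + b ^ 4) * Real.sin x ^ 4
      + Real.sin x * Real.cos x * (-4 * a ^ 3 * b + (-4 * a * b ^ 3 + 4 * a ^ 3 * b)
        * Real.sin x ^ 2))) = fun x => |Real.cos (x + (θ + π / 2) - θ)| ^ (-s)
          * Real.sin (x + (θ + π / 2)) ^ 4 := by
    funext x
    rw [show x + (θ + π / 2) - θ = x + π / 2 by ring, Real.cos_add_pi_div_two, abs_neg]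
    have h := quartic_rot a (-b) (Real.sin x) (Real.cos x) 0 0 (Real.sin_sq_add_cos_sq x)
    rw [Real.sin_add, Real.sin_add_pi_div_two, Real.cos_add_pi_div_two, ha, hb,
      show Real.sin x * -b + Real.cos x * a = a * Real.cos x + -b * Real.sin x by ring]
    congr 1
    linear_combination -h
  rw [key] at ev
  refine ⟨shift_angle_integrable _ hper (θ + π / 2) ev.1, ?_⟩
  rw [shift_angle _ hper (θ + π / 2), ev.2, show 4 - s = -s + 2 + 2 by ring,
    sinC_add_two (by linarith), sinC_add_two (by linarith), OmS, ha, hb]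
  have h1 : 1 - s ≠ 0 := by linarith
  have h2 : 2 - s ≠ 0 := by linarith
  have h3 : 3 - s ≠ 0 := by linarith
  have h4 : 4 - s ≠ 0 := by linarith
  rw [show -s + 2 + 2 = 4 - s by ring, show -s + 2 + 1 = 3 - s by ring,
    show -s + 2 = 2 - s by ring, show -s + 1 = 1 - s by ring, show -s + 3 = 3 - s by ring,
    show -s + 4 = 4 - s by ring]
  field_simp
  ring

/-! ### The singular part of the potential -/

theorem nrm_nonneg (z : ℝ × ℝ) : 0 ≤ nrm z := Real.sqrt_nonneg _

theorem nrm_sq (z : ℝ × ℝ) : nrm z ^ 2 = z.1 ^ 2 + z.2 ^ 2 := Real.sq_sqrt (by positivity)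

theorem polar (z : ℝ × ℝ) : z.1 = nrm z * Real.cos (ang z) ∧ z.2 = nrm z * Real.sin (ang z) := by
  have hn : ‖(⟨z.1, z.2⟩ : ℂ)‖ = nrm z := by
    rw [Complex.norm_def, Complex.normSq_mk, nrm]
    congr 1; ring
  have h := Complex.norm_mul_cos_add_sin_mul_I ⟨z.1, z.2⟩
  have h1 := Complex.norm_mul_cos_arg ⟨z.1, z.2⟩
  have h2 := Complex.norm_mul_sin_arg ⟨z.1, z.2⟩
  rw [hn] at h1 h2
  unfold ang
  split_ifs with hp
  · rw [hp] at h1 h2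
    rw [Real.cos_neg, Real.sin_neg, h1, mul_neg, h2]
    simp at h2
    simp [← h2]
  · exact ⟨h1.symm, h2.symm⟩

theorem measurable_nrm : Measurable nrm := by
  unfold nrm
  fun_prop

theorem measurable_ang : Measurable ang := by
  have h : Measurable fun x : ℝ × ℝ => Complex.arg ⟨x.1, x.2⟩ :=
    Complex.measurable_arg.comp Complex.measurableEquivRealProd.symm.measurable
  exact Measurable.ite (h (measurableSet_singleton π)) measurable_const h

/-- The singular part `|z|^{-s} Ω*(θ(z))` of the interaction kernel, with value `0` at the origin
when `s ≠ 0`. -/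
def sing (s : ℝ) (z : ℝ × ℝ) : ℝ := nrm z ^ (-s) * OmS s (ang z)

theorem measurable_sing (s : ℝ) : Measurable (sing s) := by
  have := measurable_nrm
  have := measurable_ang
  unfold sing OmS
  fun_prop

theorem sing_nonneg {s : ℝ} (hs0 : 0 < s) (hs1 : s < 1) (z : ℝ × ℝ) : 0 ≤ sing s z :=
  mul_nonneg (rpow_nonneg (nrm_nonneg z) _) (by linarith [OmS_one_le hs0 hs1 (ang z)])

/-- The singular kernel on `ℝ²` is a superposition of one-dimensional Riesz kernels
`|⟨z, e_φ⟩|^{-s}` with weight `sin⁴ φ`. -/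
theorem superpos {s : ℝ} (hs0 : 0 < s) (hs1 : s < 1) (z : ℝ × ℝ) :
    ∫⁻ φ in Ioo (-π) π, ENNReal.ofReal
      (Real.sin φ ^ 4 * |z.1 * Real.cos φ + z.2 * Real.sin φ| ^ (-s)) =
    ENNReal.ofReal (sinC (4 - s)) * ENNReal.ofReal (sing s z) := by
  obtain ⟨h1, h2⟩ := polar z
  obtain ⟨hi, he⟩ := superpos_angle hs0 hs1 (ang z)
  have hn := nrm_nonneg z
  have hS : 0 ≤ sinC (4 - s) := (sinC_pos (by linarith)).le
  have key : ∀ φ, Real.sin φ ^ 4 * |z.1 * Real.cos φ + z.2 * Real.sin φ| ^ (-s) =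
      nrm z ^ (-s) * (|Real.cos (φ - ang z)| ^ (-s) * Real.sin φ ^ 4) := by
    intro φ
    rw [show z.1 * Real.cos φ + z.2 * Real.sin φ = nrm z * Real.cos (φ - ang z) by
      conv_lhs => rw [h1, h2]
      rw [Real.cos_sub]; ring, abs_mul, abs_of_nonneg hn, mul_rpow hn (abs_nonneg _)]
    ring
  rw [intervalIntegrable_iff_integrableOn_Ioo_of_le (by linarith [pi_pos])] at hi
  simp_rw [key]
  rw [← ofReal_integral_eq_lintegral_ofReal (hi.const_mul _)
    (ae_of_all _ fun φ => by positivity), integral_const_mul, ← integral_Ioc_eq_integral_Ioo,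
    ← intervalIntegral.integral_of_le (by linarith [pi_pos]), he, sing, ← ENNReal.ofReal_mul hS]
  congr 1; ring

/-- The potential of `ρ_{1D}` generated by the singular part of the kernel. -/
def Vsing (s : ℝ) (x : ℝ × ℝ) : ℝ≥0∞ :=
  ∫⁻ u, ENNReal.ofReal (rho1 s u) * ENNReal.ofReal (sing s (x - ((0 : ℝ), u)))

theorem C1_pos {s : ℝ} (hs0 : 0 < s) (hs1 : s < 1) : 0 < C1 s := by
  have := cos_pos_of hs0 hs1
  unfold C1
  positivity

theorem R1_pos {s : ℝ} (hs0 : 0 < s) (hs1 : s < 1) : 0 < R1 s :=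
  rpow_pos_of_pos (mul_pos (C1_pos hs0 hs1) (BetaR_pos (by norm_num) (by linarith))) _

theorem measurable_rho1 (s : ℝ) : Measurable (rho1 s) := by
  unfold rho1
  fun_prop

theorem rho1_nonneg {s : ℝ} (hs0 : 0 < s) (hs1 : s < 1) (u : ℝ) : 0 ≤ rho1 s u := by
  have := C1_pos hs0 hs1
  unfold rho1
  positivity

theorem rho1_out {s u : ℝ} (hs0 : 0 < s) (hs1 : s < 1) (hu : R1 s ≤ |u|) : rho1 s u = 0 := by
  have hR := R1_pos hs0 hs1
  have : R1 s ^ 2 ≤ u ^ 2 := by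
    rw [← sq_abs u]
    gcongr
  rw [rho1, max_eq_right (by linarith), zero_rpow (by linarith), mul_zero]

theorem rho1_lint {s : ℝ} (hs0 : 0 < s) (hs1 : s < 1) (f : ℝ → ℝ≥0∞) :
    ∫⁻ u, ENNReal.ofReal (rho1 s u) * f u = ENNReal.ofReal (C1 s) *
      ∫⁻ u in Ioo (-R1 s) (R1 s), ENNReal.ofReal ((R1 s ^ 2 - u ^ 2) ^ ((1 + s) / 2)) * f u := by
  rw [← lintegral_const_mul' _ _ ENNReal.ofReal_ne_top, ← lintegral_indicator measurableSet_Ioo]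
  refine lintegral_congr fun u => ?_
  by_cases hu : u ∈ Ioo (-R1 s) (R1 s)
  · have hR := R1_pos hs0 hs1
    have : 0 ≤ R1 s ^ 2 - u ^ 2 := by nlinarith [hu.1, hu.2]
    rw [indicator_of_mem hu, rho1, max_eq_left this, ENNReal.ofReal_mul (C1_pos hs0 hs1).le,
      mul_assoc]
  · rw [indicator_of_notMem hu, rho1_out hs0 hs1, ENNReal.ofReal_zero, zero_mul]
    by_contra! h
    exact hu (abs_lt.mp h)

/-- The one-dimensional Riesz potential of `ρ₁`. -/
theorem rho1_segPot {s : ℝ} (hs0 : 0 < s) (hs1 : s < 1) (t : ℝ) :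
    ∫⁻ u, ENNReal.ofReal (rho1 s u) * ENNReal.ofReal (|t - u| ^ (-s)) =
      ENNReal.ofReal (C1 s) * segPot s (R1 s) t := by
  rw [rho1_lint hs0 hs1, segPot]
  congr 1
  refine setLIntegral_congr_fun measurableSet_Ioo fun u _ => ?_
  rw [← ENNReal.ofReal_mul' (by positivity), mul_comm]

theorem C1_gC {s : ℝ} (hs0 : 0 < s) (hs1 : s < 1) : C1 s * ((1 + s) * gC s / 2) = 1 / s := by
  have := (cos_pos_of hs0 hs1).ne'
  have : 1 + s ≠ 0 := by linarith
  unfold C1 gC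
  field_simp
  ring

/-- After integrating the superposition against `ρ_{1D}`, each direction `e_φ` contributes the
one-dimensional potential of `ρ₁` at the point where the line through `x` orthogonal to `e_φ` meets
the vertical axis. -/
theorem Vsing_swap {s : ℝ} (hs0 : 0 < s) (hs1 : s < 1) (x : ℝ × ℝ) :
    ENNReal.ofReal (sinC (4 - s)) * Vsing s x = ∫⁻ φ in Ioo (-π) π,
      ENNReal.ofReal (|Real.sin φ| ^ (4 - s)) * (ENNReal.ofReal (C1 s) *
        segPot s (R1 s) (x.2 + x.1 * Real.cos φ / Real.sin φ)) := by
  have hr := measurable_rho1 s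
  rw [Vsing, ← lintegral_const_mul' _ _ ENNReal.ofReal_ne_top]
  simp_rw [mul_left_comm (ENNReal.ofReal (sinC (4 - s))), ← superpos hs0 hs1,
    ← lintegral_const_mul' _ _ ENNReal.ofReal_ne_top]
  rw [lintegral_lintegral_swap (by
    apply Measurable.aemeasurable
    simp only [Prod.fst_sub, Prod.snd_sub]
    fun_prop)]
  refine lintegral_congr fun φ => ?_
  rw [← rho1_segPot hs0 hs1, ← lintegral_const_mul' _ _ ENNReal.ofReal_ne_top]
  refine lintegral_congr fun u => ?_
  rw [mul_left_comm (ENNReal.ofReal (|Real.sin φ| ^ (4 - s))), ← ENNReal.ofReal_mul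
    (by positivity : 0 ≤ |Real.sin φ| ^ (4 - s))]
  congr 2
  rcases eq_or_ne (Real.sin φ) 0 with h | h
  · rw [h, abs_zero, zero_rpow (by linarith)]
    simp
  · have hp := abs_pos.mpr h
    have e : (x - ((0 : ℝ), u)).1 * Real.cos φ + (x - ((0 : ℝ), u)).2 * Real.sin φ =
        Real.sin φ * (x.2 + x.1 * Real.cos φ / Real.sin φ - u) := by
      simp only [Prod.fst_sub, Prod.snd_sub]
      field_simp
      ring
    have e4 : Real.sin φ ^ 4 = |Real.sin φ| ^ (4 : ℝ) := by
      rw [show (4 : ℝ) = ((4 : ℕ) : ℝ) by norm_num, rpow_natCast, Even.pow_abs (by decide)]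
    rw [e, abs_mul, mul_rpow hp.le (abs_nonneg _), ← mul_assoc, e4, ← rpow_add hp,
      ← sub_eq_add_neg]

theorem Vsing_ne_top {s : ℝ} (hs0 : 0 < s) (hs1 : s < 1) (x : ℝ × ℝ) : Vsing s x ≠ ⊤ := by
  intro h
  have hS : 0 < sinC (4 - s) := sinC_pos (by linarith)
  have h1 := Vsing_swap hs0 hs1 x
  rw [h, ENNReal.mul_top (by simpa using hS)] at h1
  have h2 : ∫⁻ φ in Ioo (-π) π, ENNReal.ofReal (|Real.sin φ| ^ (4 - s)) * (ENNReal.ofReal (C1 s) *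
      segPot s (R1 s) (x.2 + x.1 * Real.cos φ / Real.sin φ)) ≤
      ∫⁻ φ in Ioo (-π) π, ENNReal.ofReal (|Real.sin φ| ^ (4 - s)) * (ENNReal.ofReal (C1 s) *
        ENNReal.ofReal ((1 + s) * gC s / 2 * R1 s ^ 2)) := by
    gcongr
    exact segPot_le hs0 hs1 (R1_pos hs0 hs1) _
  rw [← h1, lintegral_mul_const _ (by fun_prop), lint_sin (by linarith)] at h2
  exact (ENNReal.mul_lt_top ENNReal.ofReal_lt_top (ENNReal.mul_lt_top ENNReal.ofReal_lt_top
    ENNReal.ofReal_lt_top)).ne (top_le_iff.mp h2)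

/-- The one-dimensional Euler–Lagrange inequality, averaged over directions. -/
theorem Vsing_ge {s : ℝ} (hs0 : 0 < s) (hs1 : s < 1) (x : ℝ × ℝ) :
    ENNReal.ofReal (R1 s ^ 2 / s) ≤ Vsing s x + ENNReal.ofReal (nrm x ^ 2) := by
  have hS : 0 < sinC (4 - s) := sinC_pos (by linarith)
  have hC := C1_pos hs0 hs1
  have hg := gC_pos hs0 hs1
  have hCg := C1_gC hs0 hs1
  have hR := R1_pos hs0 hs1
  have ev := sin_poly (p := 2 - s) (by linarith) (x.1 ^ 2) (x.2 ^ 2 - x.1 ^ 2) 0 (2 * x.1 * x.2) 0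
  -- the averaged quadratic term is `sinC (4 - s) * (x₂² + x₁² / (3 - s))`
  have hsq : (fun φ => |Real.sin φ| ^ (2 - s) * (x.1 ^ 2 + (x.2 ^ 2 - x.1 ^ 2) * Real.sin φ ^ 2 +
      0 * Real.sin φ ^ 4 + Real.sin φ * Real.cos φ * (2 * x.1 * x.2 + 0 * Real.sin φ ^ 2))) =
      fun φ => |Real.sin φ| ^ (2 - s) * (x.2 * Real.sin φ + x.1 * Real.cos φ) ^ 2 := by
    funext φ
    congr 1
    linear_combination (-x.1 ^ 2) * Real.sin_sq_add_cos_sq φ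
  rw [hsq] at ev
  obtain ⟨ei, ev⟩ := ev
  rw [intervalIntegrable_iff_integrableOn_Ioo_of_le (by linarith [pi_pos])] at ei
  rw [intervalIntegral.integral_of_le (by linarith [pi_pos]), integral_Ioc_eq_integral_Ioo] at ev
  have hpt : ∀ φ, ENNReal.ofReal (|Real.sin φ| ^ (4 - s)) * ENNReal.ofReal (R1 s ^ 2 / s) ≤
      ENNReal.ofReal (|Real.sin φ| ^ (4 - s)) * (ENNReal.ofReal (C1 s) *
        segPot s (R1 s) (x.2 + x.1 * Real.cos φ / Real.sin φ)) +
      ENNReal.ofReal (|Real.sin φ| ^ (2 - s) * (x.2 * Real.sin φ + x.1 * Real.cos φ) ^ 2) := by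
    intro φ
    rcases eq_or_ne (Real.sin φ) 0 with h | h
    · rw [h, abs_zero, zero_rpow (by linarith)]
      simp
    · have hp := abs_pos.mpr h
      set t := x.2 + x.1 * Real.cos φ / Real.sin φ with ht
      have h1 := segPot_ge hs0 hs1 hR t
      have e1 : |Real.sin φ| ^ (2 - s) * (x.2 * Real.sin φ + x.1 * Real.cos φ) ^ 2 =
          |Real.sin φ| ^ (4 - s) * (C1 s * ((1 + s) * gC s / 2 * s * t ^ 2)) := by
        rw [show C1 s * ((1 + s) * gC s / 2 * s * t ^ 2) = C1 s * ((1 + s) * gC s / 2) * s * t ^ 2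
          by ring, hCg, show 4 - s = 2 - s + (2 : ℕ) by push_cast; ring, rpow_add hp,
          rpow_natCast, sq_abs, ht]
        field_simp
      have e2 : R1 s ^ 2 / s = C1 s * ((1 + s) * gC s / 2 * R1 s ^ 2) := by
        rw [← mul_assoc, hCg]
        ring
      rw [e1, e2, ENNReal.ofReal_mul (by positivity : 0 ≤ |Real.sin φ| ^ (4 - s)),
        ENNReal.ofReal_mul hC.le, ENNReal.ofReal_mul hC.le, ← mul_add, ← mul_add]
      gcongr
  have hint := lintegral_mono (μ := volume.restrict (Ioo (-π) π)) hpt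
  rw [lintegral_mul_const _ (by fun_prop), lint_sin (by linarith),
    lintegral_add_right _ (by fun_prop), ← Vsing_swap hs0 hs1,
    ← ofReal_integral_eq_lintegral_ofReal ei (ae_of_all _ fun φ => by positivity), ev] at hint
  have hval : sinC (2 - s) * (x.1 ^ 2 + (x.2 ^ 2 - x.1 ^ 2) * ((2 - s + 1) / (2 - s + 2)) +
      0 * ((2 - s + 1) * (2 - s + 3) / ((2 - s + 2) * (2 - s + 4)))) ≤
      sinC (4 - s) * nrm x ^ 2 := by
    have hS2 : 0 < sinC (2 - s) := sinC_pos (by linarith)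
    have h4 : 0 < 4 - s := by linarith
    rw [show 4 - s = 2 - s + 2 by ring, sinC_add_two (by linarith), nrm_sq, zero_mul, add_zero,
      mul_comm ((2 - s + 1) / (2 - s + 2)), mul_assoc]
    gcongr
    rw [show 2 - s + 2 = 4 - s by ring, show 2 - s + 1 = 3 - s by ring,
      show x.1 ^ 2 + (x.2 ^ 2 - x.1 ^ 2) * ((3 - s) / (4 - s)) =
        (x.1 ^ 2 + x.2 ^ 2 * (3 - s)) / (4 - s) by field_simp; ring,
      div_mul_eq_mul_div]
    gcongr
    nlinarith [sq_nonneg x.1]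
  have hfin := hint.trans (add_le_add_right (ENNReal.ofReal_le_ofReal hval) _)
  rw [ENNReal.ofReal_mul hS.le, ← mul_add] at hfin
  exact (ENNReal.mul_le_mul_iff_right (by simpa using hS) ENNReal.ofReal_ne_top).mp hfin

/-- On the vertical axis `Ω* = 1`, so the potential is the one-dimensional one. -/
theorem Vsing_axis {s t : ℝ} (hs0 : 0 < s) (hs1 : s < 1) (ht : |t| ≤ R1 s) :
    Vsing s (0, t) = ENNReal.ofReal (R1 s ^ 2 / s - t ^ 2) := by
  have hsing : ∀ u, sing s (((0 : ℝ), t) - ((0 : ℝ), u)) = |t - u| ^ (-s) := by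
    intro u
    obtain ⟨h1, h2⟩ := polar (((0 : ℝ), t) - ((0 : ℝ), u))
    have hn : nrm (((0 : ℝ), t) - ((0 : ℝ), u)) = |t - u| := by
      rw [nrm]
      simp [Real.sqrt_sq_eq_abs]
    rw [sing, hn]
    rcases eq_or_ne (t - u) 0 with h | h
    · rw [h, abs_zero, zero_rpow (by linarith), zero_mul]
    · rw [hn] at h1
      have hc : Real.cos (ang (((0 : ℝ), t) - ((0 : ℝ), u))) = 0 := by
        have h3 : |t - u| * Real.cos (ang (((0 : ℝ), t) - ((0 : ℝ), u))) = 0 := by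
          rw [← h1]
          simp
        exact (mul_eq_zero.mp h3).resolve_left (abs_ne_zero.mpr h)
      have hs := Real.sin_sq_add_cos_sq (ang (((0 : ℝ), t) - ((0 : ℝ), u)))
      rw [hc] at hs
      rw [OmS, hc, show Real.sin (ang (((0 : ℝ), t) - ((0 : ℝ), u))) ^ 4 =
        (Real.sin (ang (((0 : ℝ), t) - ((0 : ℝ), u))) ^ 2 + 0 ^ 2) ^ 2 by ring, hs]
      ring
  rw [Vsing]
  simp_rw [hsing]
  rw [rho1_segPot hs0 hs1, segPot_in hs0 hs1 (R1_pos hs0 hs1) ht,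
    ← ENNReal.ofReal_mul (C1_pos hs0 hs1).le, ← mul_assoc, C1_gC hs0 hs1]
  congr 1
  field_simp

/-! ### The potential of `ρ_{1D}` -/

/-- `R₁` is the radius for which `ρ₁` is a probability density. -/
theorem mass_one {s : ℝ} (hs0 : 0 < s) (hs1 : s < 1) :
    ∫⁻ u, ENNReal.ofReal (rho1 s u) = 1 := by
  have hR := R1_pos hs0 hs1
  have hC := C1_pos hs0 hs1
  have hB : 0 < BetaR (1 / 2) ((3 + s) / 2) := BetaR_pos (by norm_num) (by linarith)
  have h := rho1_lint hs0 hs1 (fun _ => 1)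
  simp only [mul_one] at h
  have hq : 0 < (3 + s) / 2 := by linarith
  have hb := lint_beta_sym hq hq hR
  have hc : ∫⁻ u in Ioo (-R1 s) (R1 s), ENNReal.ofReal ((R1 s ^ 2 - u ^ 2) ^ ((1 + s) / 2)) =
      ∫⁻ u in Ioo (-R1 s) (R1 s), ENNReal.ofReal
        ((R1 s - u) ^ ((3 + s) / 2 - 1) * (R1 s + u) ^ ((3 + s) / 2 - 1)) := by
    refine setLIntegral_congr_fun measurableSet_Ioo fun u hu => ?_
    rw [← mul_rpow (by linarith [hu.2]) (by linarith [hu.1])]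
    congr 2 <;> ring
  rw [h, hc, hb, ← ENNReal.ofReal_mul hC.le,
    show (3 + s) / 2 + (3 + s) / 2 - 1 = 2 * ((3 + s) / 2) - 1 by ring,
    mul_rpow (by norm_num) hR.le, mul_right_comm _ _ (BetaR _ _), BetaR_dup hq,
    show 2 * ((3 + s) / 2) - 1 = s + 2 by ring, R1, ← rpow_mul (mul_pos hC hB).le,
    show -(1 / (s + 2)) * (s + 2) = -1 by
      have : s + 2 ≠ 0 := by linarith
      field_simp, rpow_neg_one, ← mul_assoc, mul_inv_cancel₀ (mul_pos hC hB).ne',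
    ENNReal.ofReal_one]

/-- The second moment of `ρ₁`. -/
def mom2 (s : ℝ) : ℝ≥0∞ := ∫⁻ u, ENNReal.ofReal (rho1 s u) * ENNReal.ofReal (u ^ 2)

theorem mom2_ne_top {s : ℝ} (hs0 : 0 < s) (hs1 : s < 1) : mom2 s ≠ ⊤ := by
  have h : mom2 s ≤ ∫⁻ u, ENNReal.ofReal (rho1 s u) * ENNReal.ofReal (R1 s ^ 2) := by
    refine lintegral_mono fun u => ?_
    rcases le_or_gt (R1 s) |u| with hu | hu
    · simp [rho1_out hs0 hs1 hu]
    · have : u ^ 2 ≤ R1 s ^ 2 := by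
        rw [← sq_abs u]
        gcongr
      gcongr
  have hr := measurable_rho1 s
  rw [lintegral_mul_const _ (by fun_prop), mass_one hs0 hs1, one_mul] at h
  exact (h.trans_lt ENNReal.ofReal_lt_top).ne

/-- The quadratic part of the potential: `ρ₁` has mass one and is centered. -/
theorem quad_part {s : ℝ} (hs0 : 0 < s) (hs1 : s < 1) (x : ℝ × ℝ) :
    ∫⁻ u, ENNReal.ofReal (rho1 s u) * ENNReal.ofReal (nrm (x - ((0 : ℝ), u)) ^ 2) =
      ENNReal.ofReal (nrm x ^ 2) + mom2 s := by
  have hr := measurable_rho1 s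
  have he : ∀ u, rho1 s (-u) = rho1 s u := by
    intro u
    rw [rho1, rho1, neg_sq]
  have h1 : ∀ u, nrm (x - ((0 : ℝ), u)) ^ 2 = x.1 ^ 2 + (x.2 - u) ^ 2 := by
    intro u
    rw [nrm_sq]
    simp
  simp_rw [h1]
  -- adding the integral to its image under `u ↦ -u` removes the terms linear in `u`
  set I := ∫⁻ u, ENNReal.ofReal (rho1 s u) * ENNReal.ofReal (x.1 ^ 2 + (x.2 - u) ^ 2) with hI
  have h2 : I = ∫⁻ u, ENNReal.ofReal (rho1 s u) * ENNReal.ofReal (x.1 ^ 2 + (x.2 + u) ^ 2) := by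
    rw [hI, ← lintegral_neg_eq_self]
    simp_rw [he, sub_neg_eq_add]
  have h3 : I + I = (ENNReal.ofReal (nrm x ^ 2) + mom2 s) +
      (ENNReal.ofReal (nrm x ^ 2) + mom2 s) := by
    nth_rw 2 [h2]
    have h4 : ENNReal.ofReal (nrm x ^ 2) + mom2 s =
        ∫⁻ u, ENNReal.ofReal (rho1 s u) * ENNReal.ofReal (nrm x ^ 2 + u ^ 2) := by
      simp_rw [ENNReal.ofReal_add (sq_nonneg (nrm x)) (sq_nonneg _), mul_add]
      rw [lintegral_add_left (by fun_prop), lintegral_mul_const _ (by fun_prop),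
        mass_one hs0 hs1, one_mul, mom2]
    rw [hI, h4, ← lintegral_add_left (by fun_prop), ← lintegral_add_left (by fun_prop)]
    refine lintegral_congr fun u => ?_
    rw [← mul_add, ← mul_add, ← ENNReal.ofReal_add (by positivity) (by positivity),
      ← ENNReal.ofReal_add (by positivity) (by positivity), nrm_sq]
    congr 2
    ring
  rw [← two_mul, ← two_mul] at h3
  exact (ENNReal.mul_right_inj two_ne_zero ENNReal.ofNat_ne_top).mp h3

theorem measurable_Wr (s : ℝ) : Measurable (Wr s (OmS s)) := by
  have h1 := measurable_sing s
  have h2 := measurable_nrm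
  have : Wr s (OmS s) = fun x => sing s x + nrm x ^ 2 := rfl
  rw [this]
  fun_prop

theorem potential_eq {s : ℝ} (hs0 : 0 < s) (hs1 : s < 1) (x : ℝ × ℝ) :
    ∫ z, Wr s (OmS s) (x - z) ∂(rho1D s) =
      (Vsing s x + (ENNReal.ofReal (nrm x ^ 2) + mom2 s)).toReal := by
  have hW := measurable_Wr s
  have hr := measurable_rho1 s
  have hsg := measurable_sing s
  have hn := measurable_nrm
  have hp : Measurable fun t : ℝ => ((0 : ℝ), t) := by fun_prop
  have hnn : ∀ z, 0 ≤ Wr s (OmS s) z := fun z => add_nonneg (sing_nonneg hs0 hs1 z) (sq_nonneg _)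
  have hWx : Measurable fun z => Wr s (OmS s) (x - z) :=
    hW.comp (measurable_const.sub measurable_id)
  have hden := lintegral_withDensity_eq_lintegral_mul volume hr.ennreal_ofReal
    (hWx.ennreal_ofReal.comp hp)
  simp only [Function.comp_def] at hden
  rw [integral_eq_lintegral_of_nonneg_ae (ae_of_all _ fun z => hnn _) hWx.aestronglyMeasurable,
    rho1D, lintegral_map hWx.ennreal_ofReal hp, rho1meas, hden,
    ← quad_part hs0 hs1, Vsing, ← lintegral_add_left (by fun_prop)]
  congr 1
  refine lintegral_congr fun u => ?_
  rw [← mul_add, ← ENNReal.ofReal_add (sing_nonneg hs0 hs1 _) (sq_nonneg _)]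
  rfl

/-- The support of `ρ_{1D}` is contained in the vertical segment of half-length `R₁`. -/
theorem support_sub {s : ℝ} (hs0 : 0 < s) (hs1 : s < 1) {y : ℝ × ℝ}
    (hy : y ∈ msupport (rho1D s)) : y.1 = 0 ∧ |y.2| ≤ R1 s := by
  have hp : Measurable fun t : ℝ => ((0 : ℝ), t) := by fun_prop
  constructor
  · by_contra h
    have ho : IsOpen {p : ℝ × ℝ | p.1 ≠ 0} := isOpen_ne_fun continuous_fst continuous_const
    have h1 := hy _ (ho.mem_nhds h)
    rw [rho1D, Measure.map_apply hp ho.measurableSet] at h1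
    simp at h1
  · by_contra! h
    have ho : IsOpen {p : ℝ × ℝ | R1 s < |p.2|} :=
      isOpen_lt continuous_const (continuous_abs.comp continuous_snd)
    have h1 := hy _ (ho.mem_nhds h)
    rw [rho1D, Measure.map_apply hp ho.measurableSet, rho1meas,
      withDensity_apply _ (hp ho.measurableSet),
      setLIntegral_congr_fun (g := fun _ => 0) (hp ho.measurableSet)
        (fun u hu => by rw [rho1_out hs0 hs1 (le_of_lt hu), ENNReal.ofReal_zero])] at h1
    simp at h1

/-- The potential attains its minimum `R₁² / s + mom2 s` on the support. -/
theorem potential_min {s : ℝ} (hs0 : 0 < s) (hs1 : s < 1) (x y : ℝ × ℝ)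
    (hy : y ∈ msupport (rho1D s)) :
    (∫ z, Wr s (OmS s) (y - z) ∂(rho1D s)) ≤ ∫ z, Wr s (OmS s) (x - z) ∂(rho1D s) := by
  obtain ⟨h0, ht⟩ := support_sub hs0 hs1 hy
  obtain ⟨y1, t⟩ := y
  simp only at h0 ht
  subst h0
  have hR := R1_pos hs0 hs1
  have ht2 : t ^ 2 ≤ R1 s ^ 2 := by
    rw [← sq_abs t]
    gcongr
  have hRs : t ^ 2 ≤ R1 s ^ 2 / s := by
    rw [le_div_iff₀ hs0]
    nlinarith [sq_nonneg t]
  rw [potential_eq hs0 hs1, potential_eq hs0 hs1]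
  refine ENNReal.toReal_mono ?_ ?_
  · exact ENNReal.add_ne_top.mpr ⟨Vsing_ne_top hs0 hs1 x,
      ENNReal.add_ne_top.mpr ⟨ENNReal.ofReal_ne_top, mom2_ne_top hs0 hs1⟩⟩
  · rw [← add_assoc, ← add_assoc]
    refine add_le_add_left (le_trans (le_of_eq ?_) (Vsing_ge hs0 hs1 x)) _
    rw [Vsing_axis hs0 hs1 ht, nrm_sq, ← ENNReal.ofReal_add (by linarith) (by positivity)]
    congr 1
    ring

/-- for each `0 < s < 1` there exists an angle function `Ω*` satisfying (H)
with `Ω*(π/2) = 1`, `Ω* ≥ 1`, nonnegative transformed angle function, and such that the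
potential generated by `ρ_{1D}` attains its global minimum on `supp ρ_{1D}`. -/
theorem statement10 (s : ℝ) (hs0 : 0 < s) (hs1 : s < 1) :
    ∃ Ωs : ℝ → ℝ, SatisfiesH Ωs ∧ Ωs (π / 2) = 1 ∧ (∀ θ, 1 ≤ Ωs θ) ∧
      (∀ φ, 0 ≤ Omt s Ωs φ) ∧
      ∀ x : ℝ × ℝ, ∀ y ∈ msupport (rho1D s),
        (∫ z, Wr s Ωs (y - z) ∂(rho1D s)) ≤ ∫ z, Wr s Ωs (x - z) ∂(rho1D s) := by
  exact ⟨OmS s, OmS_satisfiesH hs0 hs1, OmS_half_pi s, OmS_one_le hs0 hs1, OmS_Omt hs0 hs1,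
    fun x y hy => potential_min hs0 hs1 x y hy⟩

end Aniso
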